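/- arXiv:1908.02834 — 15 statements merged into one kernel-verified Lean document; each statement's English description precedes it below -/
import Mathlib

section
/- Let α: I → ℝⁿ be a C² unit-speed curve on a nonempty open interval I ⊆ ℝ and let p ∈ ℝⁿ. If there exist real constants b and c such that ‖α(s) − p‖² = s² + 2bs + c for every s ∈ I, then α is rectifying with vertex p, i.e. ⟨α(s) − p, α''(s)⟩ = 0 for all s ∈ I. -/
open scoped InnerProductSpace

/-!
Differentiating `‖α - p‖²` twice gives `2 (⟪α - p, α''⟫ + ‖α'‖²)`. For a unit-speed curve this is
`2 (⟪α - p, α''⟫ + 1)`, while the second derivative of the monic quadratic is `2`.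
-/

open scoped Topology

theorem deriv_deriv_sq_add_mul_add_const {𝕜 : Type*} [NontriviallyNormedField 𝕜] (b c x : 𝕜) :
    deriv (deriv fun t : 𝕜 => t ^ 2 + b * t + c) x = 2 := by
  have hderiv : (deriv fun t : 𝕜 => t ^ 2 + b * t + c) = fun t => 2 * t + b := by
    funext t
    simpa using ((hasDerivAt_pow 2 t).add (hasDerivAt_const_mul b)).add_const c |>.deriv
  rw [hderiv, deriv_add_const, deriv_const_mul_id]

section InnerProductSpace

variable {F : Type*} [NormedAddCommGroup F] [InnerProductSpace ℝ F]

theorem deriv_deriv_norm_sq {f : ℝ → F} {s : ℝ} (hf : ∀ᶠ t in 𝓝 s, DifferentiableAt ℝ f t)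
    (hf' : DifferentiableAt ℝ (deriv f) s) :
    deriv (deriv fun t => ‖f t‖ ^ 2) s = 2 * (⟪f s, deriv (deriv f) s⟫_ℝ + ‖deriv f s‖ ^ 2) := by
  have hderiv : (deriv fun t => ‖f t‖ ^ 2) =ᶠ[𝓝 s] fun t => 2 * ⟪f t, deriv f t⟫_ℝ :=
    hf.mono fun _ ht => ht.hasDerivAt.norm_sq.deriv
  have hinner := hf.self_of_nhds.hasDerivAt.inner ℝ hf'.hasDerivAt
  rw [hderiv.deriv_eq, (hinner.const_mul 2).deriv, real_inner_self_eq_norm_sq]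

theorem rectifying_of_distance_quadratic_general {I : Set ℝ} (hI : IsOpen I) {α : ℝ → F} {p : F}
    (hα' : DifferentiableOn ℝ (deriv α) I) (hunit : ∀ s ∈ I, ‖deriv α s‖ = 1) {b c : ℝ}
    (hdist : ∀ s ∈ I, ‖α s - p‖ ^ 2 = s ^ 2 + 2 * b * s + c) :
    ∀ s ∈ I, ⟪α s - p, deriv (deriv α) s⟫_ℝ = 0 := by
  intro s hs
  have hI_nhds : I ∈ 𝓝 s := hI.mem_nhds hs
  -- `deriv` vanishes where a function is not differentiable, so unit speed gives differentiability.
  have hα : ∀ t ∈ I, DifferentiableAt ℝ α t := fun t ht =>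
    differentiableAt_of_deriv_ne_zero <| norm_ne_zero_iff.mp (by simp [hunit t ht])
  have hderiv_sub : (deriv fun t => α t - p) = deriv α := funext fun _ => deriv_sub_const p
  have hquadratic : (fun t => ‖α t - p‖ ^ 2) =ᶠ[𝓝 s] fun t => t ^ 2 + 2 * b * t + c :=
    Filter.eventually_of_mem hI_nhds hdist
  have hsecond : 2 * (⟪α s - p, deriv (deriv α) s⟫_ℝ + 1) = 2 :=
    calc 2 * (⟪α s - p, deriv (deriv α) s⟫_ℝ + 1)
      _ = deriv (deriv fun t => ‖α t - p‖ ^ 2) s := by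
        rw [deriv_deriv_norm_sq (Filter.eventually_of_mem hI_nhds fun t ht => (hα t ht).sub_const p)
          (hderiv_sub ▸ hα'.differentiableAt hI_nhds), hderiv_sub, hunit s hs, one_pow]
      _ = deriv (deriv fun t => t ^ 2 + 2 * b * t + c) s := hquadratic.deriv.deriv_eq
      _ = 2 := deriv_deriv_sq_add_mul_add_const (2 * b) c s
  linarith

end InnerProductSpace

/-- If there are constants `b, c` with `‖α s - p‖² = s² + 2bs + c` on `I`
for a C² unit-speed curve `α`, then `α` is rectifying with vertex `p`. -/
theorem rectifying_of_distance_quadratic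
    {n : ℕ} (hn : 2 ≤ n)
    (I : Set ℝ) (hIopen : IsOpen I) (hIne : I.Nonempty) (hIconv : Convex ℝ I)
    (α : ℝ → EuclideanSpace ℝ (Fin n)) (p : EuclideanSpace ℝ (Fin n))
    (hC2 : ContDiffOn ℝ 2 α I)
    (hunit : ∀ s ∈ I, ‖deriv α s‖ = 1)
    (b c : ℝ) (hdist : ∀ s ∈ I, ‖α s - p‖ ^ 2 = s ^ 2 + 2 * b * s + c) :
    ∀ s ∈ I, ⟪α s - p, deriv (deriv α) s⟫_ℝ = 0 :=
  rectifying_of_distance_quadratic_general hIopen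
    ((hC2.deriv_of_isOpen hIopen (m := 1) (by norm_num)).differentiableOn one_ne_zero) hunit hdist
end

section
/- Let α: I → ℝⁿ be a C¹ unit-speed curve on a nonempty open interval I ⊆ ℝ, let p ∈ ℝⁿ, and let a > 0 be such that ‖α(s) − p‖² = s² + a² for every s ∈ I. Define β(s) = p + (α(s) − p)/‖α(s) − p‖. Then β(s) lies on the unit sphere centered at p for every s, α(s) = p + √(s² + a²)·(β(s) − p), and β is differentiable with ‖β'(s)‖ = a/(s² + a²) for every s ∈ I. -/
open scoped InnerProductSpace

/-! At `x ≠ 0`, the derivative of `x ↦ x / ‖x‖` is `‖x‖⁻¹` times the orthogonal projection onto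
`xᗮ`, so the speed of the radial projection of a curve is read off the Gram determinant
`‖x‖² ‖v‖² - ⟪x, v⟫²` of its position `x` and velocity `v`. Differentiating `‖x‖² = s² + a²` gives
`⟪x, v⟫ = s`, and for unit speed the Gram determinant is therefore the constant `a²`.
-/

open scoped Topology

section RadialProjection

variable {E : Type*} [NormedAddCommGroup E] [InnerProductSpace ℝ E]

theorem norm_sq_mul_norm_starProjection_orthogonal_sq (x v : E) :
    ‖x‖ ^ 2 * ‖(ℝ ∙ x)ᗮ.starProjection v‖ ^ 2 = ‖x‖ ^ 2 * ‖v‖ ^ 2 - ⟪x, v⟫_ℝ ^ 2 := by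
  have hpar : ‖x‖ ^ 2 * ‖(ℝ ∙ x).starProjection v‖ ^ 2 = ⟪x, v⟫_ℝ ^ 2 := by
    rcases eq_or_ne x 0 with rfl | hx
    · simp
    · have hx' : ‖x‖ ≠ 0 := norm_ne_zero_iff.mpr hx
      rw [Submodule.starProjection_singleton, norm_smul, mul_pow, Real.norm_eq_abs, sq_abs,
        RCLike.ofReal_real_eq_id, id]
      field_simp
  rw [Submodule.norm_sq_eq_add_norm_sq_starProjection v (ℝ ∙ x), mul_add, hpar,
    add_sub_cancel_left]

theorem hasFDerivAt_norm {x : E} (hx : x ≠ 0) :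
    HasFDerivAt (fun y : E ↦ ‖y‖) (‖x‖⁻¹ • innerSL ℝ x) x := by
  have hsqrt := (hasStrictFDerivAt_norm_sq x).hasFDerivAt.sqrt (by simpa using hx)
  simp only [Real.sqrt_sq (norm_nonneg _)] at hsqrt
  convert! hsqrt using 1
  module

theorem hasFDerivAt_normalize {x : E} (hx : x ≠ 0) :
    HasFDerivAt (NormedSpace.normalize : E → E) (‖x‖⁻¹ • (ℝ ∙ x)ᗮ.starProjection) x := by
  have hinv : HasFDerivAt (fun y : E ↦ ‖y‖⁻¹) (-(‖x‖ ^ 2)⁻¹ • ‖x‖⁻¹ • innerSL ℝ x) x :=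
    (hasDerivAt_inv (norm_ne_zero_iff.mpr hx)).comp_hasFDerivAt x (hasFDerivAt_norm hx)
  convert! hinv.smul (hasFDerivAt_id x) using 1
  ext v
  rw [Submodule.starProjection_orthogonal']
  simp only [smul_apply, sub_apply, one_apply_eq_self, Submodule.starProjection_singleton,
    Real.ringHom_apply, neg_smul, id_eq, add_apply, ContinuousLinearMap.id_apply,
    ContinuousLinearMap.smulRight_apply, neg_apply, coe_innerSL_apply, smul_eq_mul]
  module

theorem real_inner_eq_half_of_norm_sq_eventuallyEq {f : ℝ → E} {v : E} {g : ℝ → ℝ} {m s : ℝ}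
    (hf : HasDerivAt f v s) (hg : HasDerivAt g m s) (hfg : (fun t ↦ ‖f t‖ ^ 2) =ᶠ[𝓝 s] g) :
    ⟪f s, v⟫_ℝ = m / 2 := by
  have h : 2 * ⟪f s, v⟫_ℝ = m := hf.norm_sq.unique (hg.congr_of_eventuallyEq hfg)
  linarith

theorem rectifying_spherical_projection_general {α β : ℝ → E} {p v : E} {a s : ℝ} (ha : 0 < a)
    (hα : HasDerivAt α v s) (hunit : ‖v‖ = 1)
    (hdist : ∀ᶠ t in 𝓝 s, ‖α t - p‖ ^ 2 = t ^ 2 + a ^ 2)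
    (hβ : β =ᶠ[𝓝 s] fun t ↦ p + NormedSpace.normalize (α t - p)) :
    ‖β s - p‖ = 1 ∧
      α s = p + Real.sqrt (s ^ 2 + a ^ 2) • (β s - p) ∧
      DifferentiableAt ℝ β s ∧
      ‖deriv β s‖ = a / (s ^ 2 + a ^ 2) := by
  have hnorm_sq : ‖α s - p‖ ^ 2 = s ^ 2 + a ^ 2 := hdist.self_of_nhds
  have hx : α s - p ≠ 0 := by
    rw [← norm_ne_zero_iff, ← pow_ne_zero_iff two_ne_zero, hnorm_sq]
    positivity
  have hβs : β s - p = NormedSpace.normalize (α s - p) := sub_eq_of_eq_add' hβ.eq_of_nhds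
  have hαp : HasDerivAt (fun t ↦ α t - p) v s := hα.sub_const p
  have hinner : ⟪α s - p, v⟫_ℝ = s := by
    have hquad : HasDerivAt (fun t : ℝ ↦ t ^ 2 + a ^ 2) (2 * s) s := by
      simpa using (hasDerivAt_pow 2 s).add_const (a ^ 2)
    simpa using real_inner_eq_half_of_norm_sq_eventuallyEq hαp hquad hdist
  have hβ' : HasDerivAt β (‖α s - p‖⁻¹ • (ℝ ∙ (α s - p))ᗮ.starProjection v) s :=
    (((hasFDerivAt_normalize hx).comp_hasDerivAt s hαp).const_add p).congr_of_eventuallyEq hβ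
  have hproj : ‖α s - p‖ * ‖(ℝ ∙ (α s - p))ᗮ.starProjection v‖ = a := by
    rw [← sq_eq_sq₀ (by positivity) ha.le, mul_pow,
      norm_sq_mul_norm_starProjection_orthogonal_sq, hinner, hunit, hnorm_sq]
    ring
  refine ⟨?_, ?_, hβ'.differentiableAt, ?_⟩
  · rw [hβs, NormedSpace.norm_normalize hx]
  · rw [hβs, ← hnorm_sq, Real.sqrt_sq (norm_nonneg _), NormedSpace.norm_smul_normalize,
      add_sub_cancel]
  · rw [hβ'.deriv, norm_smul, norm_inv, norm_norm, ← hnorm_sq, ← hproj]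
    field_simp

end RadialProjection

/-- If a C¹ unit-speed curve `α` satisfies `‖α s - p‖² = s² + a²` (`a > 0`)
on `I`, then the radial projection `β s = p + (α s - p)/‖α s - p‖` is a unit-sphere curve,
`α s = p + √(s² + a²) • (β s - p)`, and `β` is differentiable with `‖β' s‖ = a/(s² + a²)`. -/
theorem rectifying_spherical_projection
    {n : ℕ} (hn : 2 ≤ n)
    (I : Set ℝ) (hIopen : IsOpen I) (hIne : I.Nonempty) (hIconv : Convex ℝ I)
    (α β : ℝ → EuclideanSpace ℝ (Fin n)) (p : EuclideanSpace ℝ (Fin n))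
    (hC1 : ContDiffOn ℝ 1 α I)
    (hunit : ∀ s ∈ I, ‖deriv α s‖ = 1)
    (a : ℝ) (ha : 0 < a)
    (hdist : ∀ s ∈ I, ‖α s - p‖ ^ 2 = s ^ 2 + a ^ 2)
    (hβ : ∀ s, β s = p + ‖α s - p‖⁻¹ • (α s - p)) :
    ∀ s ∈ I, ‖β s - p‖ = 1 ∧
      α s = p + Real.sqrt (s ^ 2 + a ^ 2) • (β s - p) ∧
      DifferentiableAt ℝ β s ∧
      ‖deriv β s‖ = a / (s ^ 2 + a ^ 2) := by
  intro s hs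
  have hI : I ∈ 𝓝 s := hIopen.mem_nhds hs
  exact rectifying_spherical_projection_general ha
    ((hC1.differentiableOn one_ne_zero).differentiableAt hI).hasDerivAt (hunit s hs)
    (Filter.eventually_of_mem hI hdist) (.of_forall hβ)
end

section
/- Let J ⊆ (−π/2, π/2) be a nonempty open interval, p ∈ ℝⁿ, a > 0, and let β: J → ℝⁿ be a C² curve with ‖β(t) − p‖ = 1 and ‖β'(t)‖ = 1 for all t ∈ J. Define α(t) = p + (a/cos t)·(β(t) − p). Then ‖α'(t)‖ = a/cos²t > 0 for all t ∈ J, and α is a rectifying curve with vertex p: writing T(t) = α'(t)/‖α'(t)‖ for the unit tangent, one has ⟨α(t) − p, T'(t)⟩ = 0 for all t ∈ J. -/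
open scoped InnerProductSpace

/-!
Put `b = β - p`. Differentiating `(a / cos t) • b` gives `α' = (a / cos² t) • τ` with
`τ = sin t • b + cos t • b'`. Since `b` and `b'` are orthonormal, `τ` is a unit vector, so the unit
tangent of `α` is `τ` up to the sign of `a`. In `τ'` the two `b'` terms cancel, leaving
`τ' = cos t • (b + b'')`, and this is orthogonal to `b` because differentiating `⟪b, b'⟫ = 0` gives
`⟪b, b''⟫ = -‖b'‖² = -1`.
-/

open Real Filter Topology NormedSpace

section UnitTangent

variable {E : Type*} [NormedAddCommGroup E] [NormedSpace ℝ E]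

theorem normalize_div_sq_smul_of_norm_eq_one (a : ℝ) {c : ℝ} (hc : c ≠ 0) {x : E}
    (hx : ‖x‖ = 1) : normalize ((a / c ^ 2) • x) = (SignType.sign a : ℝ) • x := by
  rw [div_eq_inv_mul, mul_smul, normalize_smul_of_pos (by positivity), normalize_smul,
    normalize_eq_self_of_norm_eq_one hx]

/-- The vector field `τ = sin t • b + cos t • b'` along `b`. When `b` is a unit-speed curve in the
unit sphere, this is the unit tangent of the curve `(a / cos t) • b` for `a > 0`. -/
noncomputable def secantTangent (b : ℝ → E) (t : ℝ) : E :=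
  sin t • b t + cos t • deriv b t

variable {b : ℝ → E} {t : ℝ}

theorem differentiableAt_of_norm_deriv_eq_one (h : ‖deriv b t‖ = 1) : DifferentiableAt ℝ b t :=
  differentiableAt_of_deriv_ne_zero (ne_zero_of_norm_ne_zero (h ▸ one_ne_zero))

theorem hasDerivAt_div_cos_smul (a : ℝ) (hcos : cos t ≠ 0) (hb : DifferentiableAt ℝ b t) :
    HasDerivAt (fun u => (a / cos u) • b u) ((a / cos t ^ 2) • secantTangent b t) t := by
  refine (((hasDerivAt_const t a).fun_div (hasDerivAt_cos t) hcos).fun_smul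
    hb.hasDerivAt).congr_deriv ?_
  rw [secantTangent]
  match_scalars
  all_goals field_simp
  ring

theorem hasDerivAt_secantTangent (hb : DifferentiableAt ℝ b t)
    (hb' : DifferentiableAt ℝ (deriv b) t) :
    HasDerivAt (secantTangent b) (cos t • (b t + deriv (deriv b) t)) t := by
  refine (((hasDerivAt_sin t).fun_smul hb.hasDerivAt).fun_add
    ((hasDerivAt_cos t).fun_smul hb'.hasDerivAt)).congr_deriv ?_
  module

end UnitTangent

variable {E : Type*} [NormedAddCommGroup E] [InnerProductSpace ℝ E]

section Inner

variable {f g : ℝ → E} {f' g' : E} {t : ℝ}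

theorem inner_eq_neg_inner_of_eventually_inner_eq {c : ℝ} (hf : HasDerivAt f f' t)
    (hg : HasDerivAt g g' t) (h : ∀ᶠ u in 𝓝 t, ⟪f u, g u⟫_ℝ = c) :
    ⟪f t, g'⟫_ℝ = -⟪f', g t⟫_ℝ :=
  eq_neg_of_add_eq_zero_left <|
    (hf.inner ℝ hg).unique ((hasDerivAt_const t c).congr_of_eventuallyEq h)

theorem inner_eq_zero_of_eventually_norm_eq {r : ℝ} (hf : HasDerivAt f f' t)
    (h : ∀ᶠ u in 𝓝 t, ‖f u‖ = r) : ⟪f t, f'⟫_ℝ = 0 := by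
  have hinner : ∀ᶠ u in 𝓝 t, ⟪f u, f u⟫_ℝ = r ^ 2 := h.mono fun u hu => by
    rw [real_inner_self_eq_norm_sq, hu]
  have hneg := inner_eq_neg_inner_of_eventually_inner_eq hf hf hinner
  rw [real_inner_comm (f t) f'] at hneg
  exact self_eq_neg.mp hneg

end Inner

theorem norm_sin_smul_add_cos_smul {x y : E} (hx : ‖x‖ = 1) (hy : ‖y‖ = 1)
    (hxy : ⟪x, y⟫_ℝ = 0) (θ : ℝ) : ‖sin θ • x + cos θ • y‖ = 1 := by
  have horth : ⟪sin θ • x, cos θ • y⟫_ℝ = 0 := by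
    rw [real_inner_smul_left, real_inner_smul_right, hxy, mul_zero, mul_zero]
  have hsq : ‖sin θ • x + cos θ • y‖ ^ 2 = 1 := by
    rw [sq, norm_add_sq_eq_norm_sq_add_norm_sq_real horth, norm_smul, norm_smul, hx, hy,
      mul_one, mul_one, norm_eq_abs, norm_eq_abs, abs_mul_abs_self, abs_mul_abs_self,
      ← sq, ← sq, sin_sq_add_cos_sq]
  exact (pow_eq_one_iff_of_nonneg (norm_nonneg _) two_ne_zero).mp hsq

section Secant

variable {b : ℝ → E} {t : ℝ}

theorem norm_secantTangent (hsph : ∀ᶠ u in 𝓝 t, ‖b u‖ = 1) (hunit : ‖deriv b t‖ = 1) :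
    ‖secantTangent b t‖ = 1 :=
  norm_sin_smul_add_cos_smul hsph.self_of_nhds hunit
    (inner_eq_zero_of_eventually_norm_eq
      (differentiableAt_of_norm_deriv_eq_one hunit).hasDerivAt hsph) t

theorem norm_deriv_div_cos_smul (a : ℝ) (hcos : cos t ≠ 0) (hsph : ∀ᶠ u in 𝓝 t, ‖b u‖ = 1)
    (hunit : ‖deriv b t‖ = 1) : ‖deriv (fun u => (a / cos u) • b u) t‖ = |a| / cos t ^ 2 := by
  rw [(hasDerivAt_div_cos_smul a hcos (differentiableAt_of_norm_deriv_eq_one hunit)).deriv,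
    norm_smul, norm_secantTangent hsph hunit, mul_one, norm_div, norm_eq_abs, norm_pow,
    norm_eq_abs, sq_abs]

theorem inner_add_deriv_deriv_eq_zero (hsph : ∀ᶠ u in 𝓝 t, ‖b u‖ = 1)
    (hunit : ∀ᶠ u in 𝓝 t, ‖deriv b u‖ = 1) (hb' : DifferentiableAt ℝ (deriv b) t) :
    ⟪b t, b t + deriv (deriv b) t⟫_ℝ = 0 := by
  have hderiv : ∀ᶠ u in 𝓝 t, HasDerivAt b (deriv b u) u := hunit.mono fun u hu =>
    (differentiableAt_of_norm_deriv_eq_one hu).hasDerivAt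
  have horth : ∀ᶠ u in 𝓝 t, ⟪b u, deriv b u⟫_ℝ = 0 := by
    filter_upwards [hderiv, hsph.eventually_nhds] with u hu hsphu
    exact inner_eq_zero_of_eventually_norm_eq hu hsphu
  have hacc : ⟪b t, deriv (deriv b) t⟫_ℝ = -⟪deriv b t, deriv b t⟫_ℝ :=
    inner_eq_neg_inner_of_eventually_inner_eq hderiv.self_of_nhds hb'.hasDerivAt horth
  rw [inner_add_right, hacc, real_inner_self_eq_norm_sq, real_inner_self_eq_norm_sq,
    hsph.self_of_nhds, hunit.self_of_nhds, add_neg_cancel]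

theorem hasDerivAt_normalize_deriv_div_cos_smul (a : ℝ) (hcos : cos t ≠ 0)
    (hsph : ∀ᶠ u in 𝓝 t, ‖b u‖ = 1) (hunit : ∀ᶠ u in 𝓝 t, ‖deriv b u‖ = 1)
    (hb' : DifferentiableAt ℝ (deriv b) t) :
    HasDerivAt (fun u => normalize (deriv (fun v => (a / cos v) • b v) u))
      ((SignType.sign a : ℝ) • cos t • (b t + deriv (deriv b) t)) t := by
  have hb := differentiableAt_of_norm_deriv_eq_one hunit.self_of_nhds
  refine ((hasDerivAt_secantTangent hb hb').fun_const_smul _).congr_of_eventuallyEq ?_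
  filter_upwards [continuous_cos.continuousAt.eventually_ne hcos, hsph.eventually_nhds, hunit]
    with u hcosu hsphu hunitu
  rw [(hasDerivAt_div_cos_smul a hcosu (differentiableAt_of_norm_deriv_eq_one hunitu)).deriv,
    normalize_div_sq_smul_of_norm_eq_one a hcosu (norm_secantTangent hsphu hunitu)]

end Secant

theorem secant_cone_curve_is_rectifying_general {J : Set ℝ} (hJ : IsOpen J)
    (hcos : ∀ t ∈ J, cos t ≠ 0) (p : E) {a : ℝ} (ha : a ≠ 0) {β : ℝ → E}
    (hβ' : DifferentiableOn ℝ (deriv β) J) (hsph : ∀ t ∈ J, ‖β t - p‖ = 1)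
    (hunit : ∀ t ∈ J, ‖deriv β t‖ = 1) {α : ℝ → E}
    (hα : ∀ t, α t = p + (a / cos t) • (β t - p)) :
    ∀ t ∈ J, ‖deriv α t‖ = |a| / cos t ^ 2 ∧ 0 < |a| / cos t ^ 2 ∧
      ⟪α t - p, deriv (fun u => ‖deriv α u‖⁻¹ • deriv α u) t⟫_ℝ = 0 := by
  intro t ht
  have hJt : J ∈ 𝓝 t := hJ.mem_nhds ht
  have hcost : cos t ≠ 0 := hcos t ht
  set b : ℝ → E := fun u => β u - p
  have hderivb : deriv b = deriv β := deriv_sub_const_fun p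
  rw [← hderivb] at hβ' hunit
  have hderivα : deriv α = deriv fun u => (a / cos u) • b u := by
    rw [funext hα]; exact deriv_const_add' p
  have hbsph : ∀ᶠ u in 𝓝 t, ‖b u‖ = 1 := eventually_of_mem hJt hsph
  have hbunit : ∀ᶠ u in 𝓝 t, ‖deriv b u‖ = 1 := eventually_of_mem hJt hunit
  have hb' : DifferentiableAt ℝ (deriv b) t := hβ'.differentiableAt hJt
  refine ⟨?_, by positivity, ?_⟩
  · rw [hderivα, norm_deriv_div_cos_smul a hcost hbsph (hunit t ht)]
  · have hT' : deriv (fun u => ‖deriv α u‖⁻¹ • deriv α u) t =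
        (SignType.sign a : ℝ) • cos t • (b t + deriv (deriv b) t) := by
      rw [hderivα]
      exact (hasDerivAt_normalize_deriv_div_cos_smul a hcost hbsph hbunit hb').deriv
    rw [hT', hα t, add_sub_cancel_left, real_inner_smul_left, real_inner_smul_right,
      real_inner_smul_right, inner_add_deriv_deriv_eq_zero hbsph hbunit hb']
    simp only [mul_zero]

/-- If `β : J → 𝕊^{n-1}(p,1)` is a C² unit-speed spherical curve on an open
interval `J ⊆ (−π/2, π/2)` and `α t = p + (a sec t) • (β t - p)` with `a > 0`, then
`‖α' t‖ = a/cos² t > 0` and `α` is rectifying with vertex `p`: its position vector is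
orthogonal to the derivative of its unit tangent `T = α'/‖α'‖`. -/
theorem secant_cone_curve_is_rectifying
    {n : ℕ} (hn : 2 ≤ n)
    (J : Set ℝ) (hJopen : IsOpen J) (hJne : J.Nonempty) (hJconv : Convex ℝ J)
    (hJsub : J ⊆ Set.Ioo (-(Real.pi / 2)) (Real.pi / 2))
    (p : EuclideanSpace ℝ (Fin n)) (a : ℝ) (ha : 0 < a)
    (β : ℝ → EuclideanSpace ℝ (Fin n))
    (hβC2 : ContDiffOn ℝ 2 β J)
    (hβsph : ∀ t ∈ J, ‖β t - p‖ = 1)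
    (hβunit : ∀ t ∈ J, ‖deriv β t‖ = 1)
    (α : ℝ → EuclideanSpace ℝ (Fin n))
    (hα : ∀ t, α t = p + (a / Real.cos t) • (β t - p)) :
    ∀ t ∈ J, ‖deriv α t‖ = a / Real.cos t ^ 2 ∧ 0 < a / Real.cos t ^ 2 ∧
      ⟪α t - p, deriv (fun u => ‖deriv α u‖⁻¹ • deriv α u) t⟫_ℝ = 0 := by
  have hβ' : DifferentiableOn ℝ (deriv β) J :=
    (hβC2.deriv_of_isOpen hJopen (m := 1) one_add_one_eq_two.le).differentiableOn one_ne_zero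
  simpa only [abs_of_pos ha] using secant_cone_curve_is_rectifying_general hJopen
    (fun t ht => (Real.cos_pos_of_mem_Ioo (hJsub ht)).ne') p ha.ne' hβ' hβsph hβunit hα
end

section
/- Let α: I → ℝⁿ be a C² unit-speed curve on a nonempty open interval I ⊆ ℝ that is rectifying with vertex p ∈ ℝⁿ. Then the squared length of the normal component of α − p, namely the function s ↦ ‖α(s) − p‖² − ⟨α(s) − p, α'(s)⟩², is constant on I. -/
open scoped InnerProductSpace

/-!
The derivative of `‖x‖² - ⟪x, x'⟫²` is `2⟪x, x'⟫ (1 - ‖x'‖² - ⟪x, x''⟫)`. For `x = α - p` the last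
factor vanishes, since unit speed gives `‖x'‖ = 1` and the rectifying condition is `⟪x, x''⟫ = 0`.
-/

section

variable {𝕜 F : Type*} [NormedAddCommGroup F] {f : 𝕜 → F} {s : Set 𝕜}

theorem exists_eq_const_of_hasDerivWithinAt_zero [RCLike 𝕜] [NormedSpace 𝕜 F]
    (hs : Convex ℝ s) (hf : ∀ x ∈ s, HasDerivWithinAt f 0 s x) : ∃ c, ∀ x ∈ s, f x = c := by
  obtain rfl | ⟨x₀, hx₀⟩ := s.eq_empty_or_nonempty
  · exact ⟨0, fun _ hx => hx.elim⟩
  refine ⟨f x₀, fun x hx => ?_⟩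
  have hle : ‖f x - f x₀‖ ≤ 0 * ‖x - x₀‖ :=
    hs.norm_image_sub_le_of_norm_hasDerivWithin_le hf (fun _ _ => norm_zero.le) hx₀ hx
  rwa [zero_mul, norm_le_zero_iff, sub_eq_zero] at hle

theorem hasDerivWithinAt_deriv_of_isOpen [NontriviallyNormedField 𝕜] [NormedSpace 𝕜 F]
    (hf : DifferentiableOn 𝕜 f s) (hs : IsOpen s) :
    ∀ x ∈ s, HasDerivWithinAt f (deriv f x) s x :=
  fun _ hx => (hf.hasDerivAt (hs.mem_nhds hx)).hasDerivWithinAt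

end

section

variable {E : Type*} [NormedAddCommGroup E] [InnerProductSpace ℝ E] {I : Set ℝ}

theorem hasDerivWithinAt_norm_sq_sub_inner_sq {x v : ℝ → E} {a : E} {s : ℝ}
    (hx : HasDerivWithinAt x (v s) I s) (hv : HasDerivWithinAt v a I s) :
    HasDerivWithinAt (fun t => ‖x t‖ ^ 2 - ⟪x t, v t⟫_ℝ ^ 2)
      (2 * ⟪x s, v s⟫_ℝ * (1 - ‖v s‖ ^ 2 - ⟪x s, a⟫_ℝ)) I s := by
  refine (hx.norm_sq.sub ((hx.inner ℝ hv).pow 2)).congr_deriv ?_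
  rw [real_inner_self_eq_norm_sq]
  ring

theorem rectifying_normal_component_const_general (hI : Convex ℝ I) {α v a : ℝ → E} (p : E)
    (hα : ∀ s ∈ I, HasDerivWithinAt α (v s) I s) (hv : ∀ s ∈ I, HasDerivWithinAt v (a s) I s)
    (hunit : ∀ s ∈ I, ‖v s‖ = 1) (hrect : ∀ s ∈ I, ⟪α s - p, a s⟫_ℝ = 0) :
    ∃ C : ℝ, ∀ s ∈ I, ‖α s - p‖ ^ 2 - ⟪α s - p, v s⟫_ℝ ^ 2 = C := by
  refine exists_eq_const_of_hasDerivWithinAt_zero hI fun s hs => ?_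
  have hderiv := hasDerivWithinAt_norm_sq_sub_inner_sq ((hα s hs).sub_const p) (hv s hs)
  have hzero : 1 - ‖v s‖ ^ 2 - ⟪α s - p, a s⟫_ℝ = 0 := by
    rw [hunit s hs, hrect s hs, one_pow, sub_self, sub_zero]
  rwa [hzero, mul_zero] at hderiv

end

/-- For a C² unit-speed rectifying curve `α` with vertex `p`, the squared
length of the normal component of `α - p`, i.e. `‖α - p‖² - ⟪α - p, α'⟫²`, is constant. -/
theorem rectifying_normal_component_const
    {n : ℕ} (hn : 2 ≤ n)
    (I : Set ℝ) (hIopen : IsOpen I) (hIne : I.Nonempty) (hIconv : Convex ℝ I)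
    (α : ℝ → EuclideanSpace ℝ (Fin n)) (p : EuclideanSpace ℝ (Fin n))
    (hC2 : ContDiffOn ℝ 2 α I)
    (hunit : ∀ s ∈ I, ‖deriv α s‖ = 1)
    (hrect : ∀ s ∈ I, ⟪α s - p, deriv (deriv α) s⟫_ℝ = 0) :
    ∃ C : ℝ, ∀ s ∈ I, ‖α s - p‖ ^ 2 - (⟪α s - p, deriv α s⟫_ℝ) ^ 2 = C := by
  have hC1 : ContDiffOn ℝ 1 (deriv α) I := hC2.deriv_of_isOpen hIopen one_add_one_eq_two.le
  exact rectifying_normal_component_const_general hIconv p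
    (hasDerivWithinAt_deriv_of_isOpen (hC2.differentiableOn two_ne_zero) hIopen)
    (hasDerivWithinAt_deriv_of_isOpen (hC1.differentiableOn one_ne_zero) hIopen) hunit hrect
end

section
/- Let α: I → ℝⁿ be a C² unit-speed curve on a nonempty open interval I ⊆ ℝ and p ∈ ℝⁿ. Assume that the function s ↦ ‖α(s) − p‖² − ⟨α(s) − p, α'(s)⟩² is constant on I and that the distance function s ↦ ‖α(s) − p‖ is not constant on any nonempty open subinterval of I. Then α is rectifying with vertex p, i.e. ⟨α(s) − p, α''(s)⟩ = 0 for all s ∈ I. -/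
open scoped InnerProductSpace

open scoped Topology

/-! Put `x = α - p`. For a unit-speed curve the derivative of `‖x‖² - ⟪x, α'⟫²` is
`-2 ⟪x, α'⟫ ⟪x, α''⟫`, so this product vanishes identically. If `⟪x, α''⟫` were nonzero at some
point, then by continuity `⟪x, α'⟫` would vanish on an interval around it. There `‖x‖²` equals its
constant normal part, so the distance to `p` would be constant on that interval. -/

lemma eventually_eq_zero_of_mul_eq_zero {X M : Type*} [TopologicalSpace X] [TopologicalSpace M]
    [T1Space M] [MulZeroClass M] [NoZeroDivisors M] {f g : X → M} {x : X}
    (hg : ContinuousAt g x) (hgx : g x ≠ 0) (hfg : ∀ᶠ y in 𝓝 x, f y * g y = 0) :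
    ∀ᶠ y in 𝓝 x, f y = 0 := by
  filter_upwards [hg.eventually_ne hgx, hfg] with y hgy hfgy
  exact (mul_eq_zero.1 hfgy).resolve_right hgy

section

variable {E : Type*} [NormedAddCommGroup E] [InnerProductSpace ℝ E]

lemma hasDerivAt_norm_sq_sub_inner_sq {x v : ℝ → E} {a : E} {s : ℝ}
    (hx : HasDerivAt x (v s) s) (hv : HasDerivAt v a s) (hunit : ‖v s‖ = 1) :
    HasDerivAt (fun t ↦ ‖x t‖ ^ 2 - ⟪x t, v t⟫_ℝ ^ 2) (-2 * (⟪x s, v s⟫_ℝ * ⟪x s, a⟫_ℝ)) s := by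
  have hinner : HasDerivAt (fun t ↦ ⟪x t, v t⟫_ℝ) (⟪x s, a⟫_ℝ + 1) s := by
    simpa [hunit] using hx.inner ℝ hv
  refine (hx.norm_sq.sub (hinner.pow 2)).congr_deriv ?_
  ring

lemma inner_mul_inner_eq_zero_of_eventually_norm_sq_sub_inner_sq_eq {x v : ℝ → E} {a : E}
    {s C : ℝ} (hx : HasDerivAt x (v s) s) (hv : HasDerivAt v a s) (hunit : ‖v s‖ = 1)
    (hC : ∀ᶠ t in 𝓝 s, ‖x t‖ ^ 2 - ⟪x t, v t⟫_ℝ ^ 2 = C) :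
    ⟪x s, v s⟫_ℝ * ⟪x s, a⟫_ℝ = 0 := by
  have hzero : -2 * (⟪x s, v s⟫_ℝ * ⟪x s, a⟫_ℝ) = 0 :=
    (hasDerivAt_norm_sq_sub_inner_sq hx hv hunit).unique
      ((hasDerivAt_const s C).congr_of_eventuallyEq hC)
  simpa using hzero

theorem rectifying_of_normal_component_const_general {I : Set ℝ} (hI : IsOpen I) {α : ℝ → E}
    {p : E} (hα : ContDiffOn ℝ 2 α I) (hunit : ∀ s ∈ I, ‖deriv α s‖ = 1)
    (hconst : ∃ C : ℝ, ∀ s ∈ I, ‖α s - p‖ ^ 2 - ⟪α s - p, deriv α s⟫_ℝ ^ 2 = C)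
    (hnonconst : ∀ a b : ℝ, a < b → Set.Ioo a b ⊆ I →
      ¬∃ R : ℝ, ∀ s ∈ Set.Ioo a b, ‖α s - p‖ = R) :
    ∀ s ∈ I, ⟪α s - p, deriv (deriv α) s⟫_ℝ = 0 := by
  obtain ⟨C, hC⟩ := hconst
  have hα' : ContDiffOn ℝ 1 (deriv α) I := hα.deriv_of_isOpen hI (by norm_num)
  have hderiv : ∀ s ∈ I, HasDerivAt (fun t ↦ α t - p) (deriv α s) s := fun s hs ↦
    ((hα.differentiableOn two_ne_zero).differentiableAt (hI.mem_nhds hs)).hasDerivAt.sub_const p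
  have hmul : ∀ s ∈ I, ⟪α s - p, deriv α s⟫_ℝ * ⟪α s - p, deriv (deriv α) s⟫_ℝ = 0 :=
    fun s hs ↦ inner_mul_inner_eq_zero_of_eventually_norm_sq_sub_inner_sq_eq (hderiv s hs)
      ((hα'.differentiableOn one_ne_zero).differentiableAt (hI.mem_nhds hs)).hasDerivAt
      (hunit s hs) (Filter.eventually_of_mem (hI.mem_nhds hs) hC)
  intro s hs
  by_contra hne
  have hcont : ContinuousAt (fun t ↦ ⟪α t - p, deriv (deriv α) t⟫_ℝ) s :=
    (hderiv s hs).continuousAt.inner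
      ((hα'.continuousOn_deriv_of_isOpen hI le_rfl).continuousAt (hI.mem_nhds hs))
  have htangent : ∀ᶠ t in 𝓝 s, ⟪α t - p, deriv α t⟫_ℝ = 0 :=
    eventually_eq_zero_of_mul_eq_zero hcont hne (Filter.eventually_of_mem (hI.mem_nhds hs) hmul)
  obtain ⟨a, b, ⟨has, hsb⟩, hab⟩ :=
    mem_nhds_iff_exists_Ioo_subset.1 (htangent.and (hI.mem_nhds hs))
  refine hnonconst a b (has.trans hsb) (fun t ht ↦ (hab ht).2) ⟨√C, fun t ht ↦ ?_⟩
  have hnorm_sq : ‖α t - p‖ ^ 2 = C := by simpa [(hab ht).1] using hC t (hab ht).2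
  rw [← hnorm_sq, Real.sqrt_sq (norm_nonneg _)]

end

/-- If the squared length of the normal component of `α - p` is constant
on `I` and the distance function `s ↦ ‖α s - p‖` is not constant on any nonempty open
subinterval of `I`, then the C² unit-speed curve `α` is rectifying with vertex `p`. -/
theorem rectifying_of_normal_component_const
    {n : ℕ} (hn : 2 ≤ n)
    (I : Set ℝ) (hIopen : IsOpen I) (hIne : I.Nonempty) (hIconv : Convex ℝ I)
    (α : ℝ → EuclideanSpace ℝ (Fin n)) (p : EuclideanSpace ℝ (Fin n))
    (hC2 : ContDiffOn ℝ 2 α I)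
    (hunit : ∀ s ∈ I, ‖deriv α s‖ = 1)
    (hconst : ∃ C : ℝ, ∀ s ∈ I, ‖α s - p‖ ^ 2 - (⟪α s - p, deriv α s⟫_ℝ) ^ 2 = C)
    (hnonconst : ∀ a b : ℝ, a < b → Set.Ioo a b ⊆ I →
      ¬ ∃ R : ℝ, ∀ s ∈ Set.Ioo a b, ‖α s - p‖ = R) :
    ∀ s ∈ I, ⟪α s - p, deriv (deriv α) s⟫_ℝ = 0 := by
  exact rectifying_of_normal_component_const_general hIopen hC2 hunit hconst hnonconst
end

section
/- Let I ⊆ ℝ be a nonempty open interval and u: I → ℝ a C² function with u(t) > 0 for all t ∈ I, satisfying the differential equation u(t)·u''(t) − 2·u'(t)² − u(t)² = 0 for all t ∈ I. Then there exist constants a > 0 and b ∈ ℝ such that for every t ∈ I one has cos(t + b) > 0 and u(t)·cos(t + b) = a (that is, u(t) = a·sec(t + b)). -/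
/-!
The reciprocal of `u` has second derivative `(2 u' ^ 2 - u u'') / u ^ 3`, so the cone-geodesic
equation says that `v = u⁻¹` satisfies `v'' = -v`: the unrolled cone is flat, and
`u = a sec (t + b)` is a straight line in polar coordinates. For a solution of `v'' = -ω ^ 2 v`, the
complex function `z = v - i v' / ω` satisfies `z' = i ω z`, hence `z = c exp (i ω t)`; taking real
parts, `v` is a cosine of amplitude `‖c‖` and phase `arg c`.
-/

section HarmonicOscillator

variable {s : Set ℝ}

theorem exists_eq_mul_cexp_of_hasDerivAt (hs : IsOpen s) (hs' : IsPreconnected s) {k : ℂ}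
    {z : ℝ → ℂ} (hz : ∀ t ∈ s, HasDerivAt z (k * z t) t) :
    ∃ c : ℂ, ∀ t ∈ s, z t = c * Complex.exp (k * t) := by
  have hconst : ∀ t ∈ s, HasDerivAt (fun x : ℝ ↦ z x * Complex.exp (-(k * x))) 0 t := by
    intro t ht
    have hexp : HasDerivAt (fun x : ℝ ↦ Complex.exp (-(k * x)))
        (Complex.exp (-(k * t)) * -(k * 1)) t :=
      ((hasDerivAt_id t).ofReal_comp.const_mul k).neg.cexp
    exact ((hz t ht).mul hexp).congr_deriv (by ring)
  obtain ⟨c, hc⟩ := hs.exists_is_const_of_deriv_eq_zero hs'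
    (fun t ht ↦ (hconst t ht).differentiableAt.differentiableWithinAt)
    (fun t ht ↦ (hconst t ht).deriv)
  refine ⟨c, fun t ht ↦ ?_⟩
  rw [← hc t ht, mul_assoc, ← Complex.exp_add, neg_add_cancel, Complex.exp_zero, mul_one]

theorem re_mul_cexp_ofReal_mul_I (c : ℂ) (x : ℝ) :
    (c * Complex.exp (x * Complex.I)).re = ‖c‖ * Real.cos (x + c.arg) := by
  conv_lhs => rw [← Complex.norm_mul_exp_arg_mul_I c]
  rw [mul_assoc, ← Complex.exp_add, ← add_mul, add_comm, ← Complex.ofReal_add,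
    Complex.re_ofReal_mul, Complex.exp_ofReal_mul_I_re]

theorem exists_eq_mul_cos_of_hasDerivAt (hs : IsOpen s) (hs' : IsPreconnected s) {ω : ℝ}
    (hω : ω ≠ 0) {v v' : ℝ → ℝ} (hv : ∀ t ∈ s, HasDerivAt v (v' t) t)
    (hv' : ∀ t ∈ s, HasDerivAt v' (-ω ^ 2 * v t) t) :
    ∃ r b : ℝ, 0 ≤ r ∧ ∀ t ∈ s, v t = r * Real.cos (ω * t + b) := by
  let z : ℝ → ℂ := fun t ↦ v t - v' t / ω * Complex.I
  have hω' : (ω : ℂ) ≠ 0 := Complex.ofReal_ne_zero.mpr hω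
  have hz : ∀ t ∈ s, HasDerivAt z (ω * Complex.I * z t) t := by
    intro t ht
    refine ((hv t ht).ofReal_comp.sub
      (((hv' t ht).ofReal_comp.div_const (ω : ℂ)).mul_const Complex.I)).congr_deriv ?_
    simp only [z]
    push_cast
    field_simp
    linear_combination (v' t : ℂ) * Complex.I_sq
  obtain ⟨c, hc⟩ := exists_eq_mul_cexp_of_hasDerivAt hs hs' hz
  refine ⟨‖c‖, c.arg, norm_nonneg c, fun t ht ↦ ?_⟩
  calc v t = (z t).re := by simp [z, ← Complex.ofReal_div]
    _ = (c * Complex.exp ((ω * t : ℝ) * Complex.I)).re := by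
      rw [hc t ht, Complex.ofReal_mul, mul_right_comm]
    _ = ‖c‖ * Real.cos (ω * t + c.arg) := re_mul_cexp_ofReal_mul_I c _

end HarmonicOscillator

section Reciprocal

variable {𝕜 : Type*} [NontriviallyNormedField 𝕜] {u u' : 𝕜 → 𝕜} {u'' t : 𝕜}

theorem hasDerivAt_neg_div_sq (hu : HasDerivAt u (u' t) t) (hu' : HasDerivAt u' u'' t)
    (ht : u t ≠ 0) :
    HasDerivAt (fun x ↦ -u' x / u x ^ 2) ((2 * u' t ^ 2 - u t * u'') / u t ^ 3) t := by
  refine (hu'.neg.div (hu.pow 2) (pow_ne_zero 2 ht)).congr_deriv ?_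
  simp only [Pi.neg_apply, Pi.pow_apply]
  field_simp
  push_cast
  ring

theorem hasDerivAt_neg_div_sq_of_cone_geodesic_ode (hu : HasDerivAt u (u' t) t)
    (hu' : HasDerivAt u' u'' t) (ht : u t ≠ 0)
    (hode : u t * u'' - 2 * u' t ^ 2 - u t ^ 2 = 0) :
    HasDerivAt (fun x ↦ -u' x / u x ^ 2) (-(u t)⁻¹) t := by
  refine (hasDerivAt_neg_div_sq hu hu' ht).congr_deriv ?_
  field_simp
  linear_combination -hode

end Reciprocal

theorem exists_inv_eq_mul_cos_of_cone_geodesic_ode {s : Set ℝ} (hs : IsOpen s)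
    (hs' : IsPreconnected s) {u u' u'' : ℝ → ℝ} (hu : ∀ t ∈ s, HasDerivAt u (u' t) t)
    (hu' : ∀ t ∈ s, HasDerivAt u' (u'' t) t) (hne : ∀ t ∈ s, u t ≠ 0)
    (hode : ∀ t ∈ s, u t * u'' t - 2 * u' t ^ 2 - u t ^ 2 = 0) :
    ∃ r b : ℝ, 0 ≤ r ∧ ∀ t ∈ s, (u t)⁻¹ = r * Real.cos (t + b) := by
  have hv : ∀ t ∈ s, HasDerivAt u⁻¹ (-u' t / u t ^ 2) t := fun t ht ↦
    (hu t ht).inv (hne t ht)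
  have hv' : ∀ t ∈ s, HasDerivAt (fun x ↦ -u' x / u x ^ 2) (-(u t)⁻¹) t := fun t ht ↦
    hasDerivAt_neg_div_sq_of_cone_geodesic_ode (hu t ht) (hu' t ht) (hne t ht) (hode t ht)
  simpa using exists_eq_mul_cos_of_hasDerivAt hs hs' one_ne_zero hv (by simpa using hv')

/-- Every positive C² solution of the cone-geodesic ODE
`u·u'' − 2·u'² − u² = 0` on an open interval is a secant function:
`u t = a · sec (t + b)` with `a > 0`. -/
theorem cone_geodesic_ode_solution_is_secant
    (I : Set ℝ) (hIopen : IsOpen I) (hIne : I.Nonempty) (hIconv : Convex ℝ I)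
    (u : ℝ → ℝ) (hC2 : ContDiffOn ℝ 2 u I)
    (hpos : ∀ t ∈ I, 0 < u t)
    (hode : ∀ t ∈ I, u t * deriv (deriv u) t - 2 * (deriv u t) ^ 2 - (u t) ^ 2 = 0) :
    ∃ a b : ℝ, 0 < a ∧ ∀ t ∈ I, 0 < Real.cos (t + b) ∧ u t * Real.cos (t + b) = a := by
  have hne : ∀ t ∈ I, u t ≠ 0 := fun t ht ↦ (hpos t ht).ne'
  have hu : ∀ t ∈ I, HasDerivAt u (deriv u t) t := fun t ht ↦
    ((hC2.differentiableOn two_ne_zero).differentiableAt (hIopen.mem_nhds ht)).hasDerivAt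
  have hC1 : ContDiffOn ℝ 1 (deriv u) I := hC2.deriv_of_isOpen hIopen one_add_one_eq_two.le
  have hu' : ∀ t ∈ I, HasDerivAt (deriv u) (deriv (deriv u) t) t := fun t ht ↦
    ((hC1.differentiableOn one_ne_zero).differentiableAt (hIopen.mem_nhds ht)).hasDerivAt
  obtain ⟨r, b, hr, hcos⟩ :=
    exists_inv_eq_mul_cos_of_cone_geodesic_ode hIopen hIconv.isPreconnected hu hu' hne hode
  have hmul : ∀ t ∈ I, 0 < r * Real.cos (t + b) := fun t ht ↦
    hcos t ht ▸ inv_pos.mpr (hpos t ht)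
  obtain ⟨t₀, ht₀⟩ := hIne
  have hr' : 0 < r := hr.lt_of_ne' (left_ne_zero_of_mul (hmul t₀ ht₀).ne')
  refine ⟨r⁻¹, b, inv_pos.mpr hr', fun t ht ↦ ⟨pos_of_mul_pos_right (hmul t ht) hr, ?_⟩⟩
  apply eq_inv_of_mul_eq_one_left
  rw [mul_assoc, mul_comm _ r, ← hcos t ht, mul_inv_cancel₀ (hne t ht)]
end

section
/- Let β: I → ℝ³ be a C² unit-speed curve on a nonempty open interval I ⊆ ℝ with ‖β(s)‖ = 1 for all s ∈ I, and let d ∈ ℝ³ be a nonzero vector. If the function s ↦ ⟨β(s) × β'(s), d⟩ is constant on I, then there exists a nonzero vector e ∈ ℝ³ such that s ↦ ⟨β(s), e⟩ is constant on I (i.e. β is an arc of a circle on the unit sphere, so the cone over β is circular or planar). -/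
open scoped InnerProductSpace

/-- The cross product on `ℝ³` regarded as `EuclideanSpace ℝ (Fin 3)`. -/
noncomputable def cross3 (x y : EuclideanSpace ℝ (Fin 3)) : EuclideanSpace ℝ (Fin 3) :=
  (WithLp.equiv 2 (Fin 3 → ℝ)).symm
    ![x 1 * y 2 - x 2 * y 1, x 2 * y 0 - x 0 * y 2, x 0 * y 1 - x 1 * y 0]

/-!
Write `T = β'` and `ξ = β × T`. The frame `(β, T, ξ)` is orthonormal and satisfies
`T' = -β + κ ξ` and `ξ' = -κ T`, where `κ` is the geodesic curvature. If `κ` is constant, then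
`κ β + ξ` is a constant nonzero vector whose inner product with `β` is `κ`, so `β` is an arc of a
circle. It remains to see that `κ` is constant when `⟪ξ, d⟫ = C` for some `d ≠ 0`. Differentiating
gives `κ ⟪T, d⟫ = 0`; near a point where `κ ≠ 0` this says `⟪T, d⟫ = 0`, and one more derivative
gives `⟪β, d⟫ = κ C`, hence `d = C (κ β + ξ)` and `‖d‖² = C² (κ² + 1)`. So the continuous function
`κ` takes at most three values on the interval, and is constant.
-/

open Filter Matrix Topology

theorem hasDerivAt_eq_zero_of_eventuallyEq_const {𝕜 F : Type*} [NontriviallyNormedField 𝕜]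
    [NormedAddCommGroup F] [NormedSpace 𝕜 F] {f : 𝕜 → F} {f' c : F} {s : 𝕜}
    (hf : HasDerivAt f f' s) (hc : f =ᶠ[𝓝 s] fun _ => c) : f' = 0 :=
  hf.unique ((hasDerivAt_const s c).congr_of_eventuallyEq hc)

theorem finite_setOf_ne_zero_imp_sq_add_one_mul_eq {a b : ℝ} (hb : b ≠ 0) :
    {k : ℝ | k ≠ 0 → (k ^ 2 + 1) * a = b}.Finite := by
  refine (Set.toFinite {0, √(b / a - 1), -√(b / a - 1)}).subset fun k hk => ?_
  rcases eq_or_ne k 0 with rfl | hk0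
  · simp
  have hab : (k ^ 2 + 1) * a = b := hk hk0
  have ha : a ≠ 0 := by
    rintro rfl
    exact hb (by rw [← hab, mul_zero])
  have hsq : b / a - 1 = k ^ 2 := by
    rw [← hab, mul_div_cancel_right₀ _ ha, add_sub_cancel_right]
  rw [hsq, Real.sqrt_sq_eq_abs]
  rcases abs_choice k with h | h <;> simp [h]

section InnerProductSpace

variable {E : Type*} [NormedAddCommGroup E] [InnerProductSpace ℝ E]

theorem hasDerivAt_inner_const {f : ℝ → E} {f' : E} {s : ℝ} (hf : HasDerivAt f f' s) (v : E) :
    HasDerivAt (fun t => ⟪f t, v⟫_ℝ) ⟪f', v⟫_ℝ s := by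
  simpa using hf.inner ℝ (hasDerivAt_const s v)

theorem inner_eq_zero_of_hasDerivAt_of_eventually_norm_eq {f : ℝ → E} {f' : E} {s r : ℝ}
    (hf : HasDerivAt f f' s) (hr : ∀ᶠ t in 𝓝 s, ‖f t‖ = r) : ⟪f s, f'⟫_ℝ = 0 := by
  have hsq : (fun t => ‖f t‖ ^ 2) =ᶠ[𝓝 s] fun _ => r ^ 2 := hr.mono fun t ht => by simp only [ht]
  simpa using hasDerivAt_eq_zero_of_eventuallyEq_const hf.norm_sq hsq

/-- A curve on the unit sphere which is `C²` and parametrized by arc length on `I`. Openness of `I`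
is part of the notion, since the velocity is the two-sided derivative `deriv β`. -/
structure IsUnitSpeedSphericalOn (β : ℝ → E) (I : Set ℝ) : Prop where
  isOpen : IsOpen I
  contDiffOn : ContDiffOn ℝ 2 β I
  norm_eq_one : ∀ s ∈ I, ‖β s‖ = 1
  norm_deriv_eq_one : ∀ s ∈ I, ‖deriv β s‖ = 1

namespace IsUnitSpeedSphericalOn

variable {β : ℝ → E} {I : Set ℝ} {s : ℝ}

theorem hasDerivAt (h : IsUnitSpeedSphericalOn β I) (hs : s ∈ I) :
    HasDerivAt β (deriv β s) s :=
  ((h.contDiffOn.differentiableOn two_ne_zero).differentiableAt (h.isOpen.mem_nhds hs)).hasDerivAt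

theorem contDiffOn_deriv (h : IsUnitSpeedSphericalOn β I) : ContDiffOn ℝ 1 (deriv β) I :=
  h.contDiffOn.deriv_of_isOpen h.isOpen one_add_one_eq_two.le

theorem hasDerivAt_deriv (h : IsUnitSpeedSphericalOn β I) (hs : s ∈ I) :
    HasDerivAt (deriv β) (deriv (deriv β) s) s :=
  ((h.contDiffOn_deriv.differentiableOn one_ne_zero).differentiableAt
    (h.isOpen.mem_nhds hs)).hasDerivAt

theorem continuousOn_deriv_deriv (h : IsUnitSpeedSphericalOn β I) :
    ContinuousOn (deriv (deriv β)) I :=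
  h.contDiffOn_deriv.continuousOn_deriv_of_isOpen h.isOpen le_rfl

theorem inner_deriv_eq_zero (h : IsUnitSpeedSphericalOn β I) (hs : s ∈ I) :
    ⟪β s, deriv β s⟫_ℝ = 0 :=
  inner_eq_zero_of_hasDerivAt_of_eventually_norm_eq (h.hasDerivAt hs)
    (eventually_of_mem (h.isOpen.mem_nhds hs) h.norm_eq_one)

theorem inner_deriv_deriv_deriv_eq_zero (h : IsUnitSpeedSphericalOn β I) (hs : s ∈ I) :
    ⟪deriv β s, deriv (deriv β) s⟫_ℝ = 0 :=
  inner_eq_zero_of_hasDerivAt_of_eventually_norm_eq (h.hasDerivAt_deriv hs)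
    (eventually_of_mem (h.isOpen.mem_nhds hs) h.norm_deriv_eq_one)

theorem inner_deriv_deriv_eq_neg_one (h : IsUnitSpeedSphericalOn β I) (hs : s ∈ I) :
    ⟪β s, deriv (deriv β) s⟫_ℝ = -1 := by
  have hconst : (fun t => ⟪β t, deriv β t⟫_ℝ) =ᶠ[𝓝 s] fun _ => 0 :=
    eventually_of_mem (h.isOpen.mem_nhds hs) fun _ => h.inner_deriv_eq_zero
  have hsum := hasDerivAt_eq_zero_of_eventuallyEq_const
    ((h.hasDerivAt hs).inner ℝ (h.hasDerivAt_deriv hs)) hconst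
  rw [real_inner_self_eq_norm_sq, h.norm_deriv_eq_one s hs] at hsum
  linarith

end IsUnitSpeedSphericalOn

end InnerProductSpace

section CrossProduct

theorem cross3_eq_toLp_crossProduct (x y : EuclideanSpace ℝ (Fin 3)) :
    cross3 x y = WithLp.toLp 2 (x.ofLp ⨯₃ y.ofLp) :=
  rfl

theorem isBilinearMap_cross3 : IsBilinearMap ℝ cross3 := by
  constructor <;> intros <;> simp [cross3_eq_toLp_crossProduct]

theorem cross3_self (x : EuclideanSpace ℝ (Fin 3)) : cross3 x x = 0 := by
  rw [cross3_eq_toLp_crossProduct, cross_self, WithLp.toLp_zero]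

theorem inner_self_cross3 (x y : EuclideanSpace ℝ (Fin 3)) : ⟪x, cross3 x y⟫_ℝ = 0 := by
  rw [real_inner_comm]
  exact dot_self_cross x.ofLp y.ofLp

theorem inner_cross3_self (x y : EuclideanSpace ℝ (Fin 3)) : ⟪y, cross3 x y⟫_ℝ = 0 := by
  rw [real_inner_comm]
  exact dot_cross_self x.ofLp y.ofLp

theorem inner_cross3_cross3 (x y z w : EuclideanSpace ℝ (Fin 3)) :
    ⟪cross3 x y, cross3 z w⟫_ℝ = ⟪x, z⟫_ℝ * ⟪y, w⟫_ℝ - ⟪x, w⟫_ℝ * ⟪y, z⟫_ℝ := by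
  simp [EuclideanSpace.inner_eq_star_dotProduct, cross3_eq_toLp_crossProduct, cross_dot_cross,
    mul_comm]

theorem cross3_cross3 (x y z : EuclideanSpace ℝ (Fin 3)) :
    cross3 x (cross3 y z) = ⟪x, z⟫_ℝ • y - ⟪x, y⟫_ℝ • z := by
  simp [EuclideanSpace.inner_eq_star_dotProduct, cross3_eq_toLp_crossProduct,
    cross_cross_eq_smul_sub_smul', dotProduct_comm]

theorem hasDerivAt_cross3 {f g : ℝ → EuclideanSpace ℝ (Fin 3)} {f' g' : EuclideanSpace ℝ (Fin 3)}
    {s : ℝ} (hf : HasDerivAt f f' s) (hg : HasDerivAt g g' s) :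
    HasDerivAt (fun t => cross3 (f t) (g t)) (cross3 (f s) g' + cross3 f' (g s)) s :=
  isBilinearMap_cross3.toContinuousBilinearMap.hasDerivAt_of_bilinear (fun _ => hf) fun _ => hg

theorem orthonormal_cross3 {x y : EuclideanSpace ℝ (Fin 3)} (hx : ‖x‖ = 1) (hy : ‖y‖ = 1)
    (hxy : ⟪x, y⟫_ℝ = 0) : Orthonormal ℝ ![x, y, cross3 x y] := by
  have hz : ‖cross3 x y‖ = 1 := by
    rw [← pow_eq_one_iff_of_nonneg (norm_nonneg _) two_ne_zero,
      ← real_inner_self_eq_norm_sq, inner_cross3_cross3, hxy, real_inner_self_eq_norm_sq,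
      real_inner_self_eq_norm_sq, hx, hy]
    norm_num
  rw [orthonormal_vecCons_iff, orthonormal_vecCons_iff]
  simp [Fin.forall_fin_succ, hx, hy, hz, hxy, inner_self_cross3, inner_cross3_self]

theorem sum_inner_smul_cross3_frame {x y : EuclideanSpace ℝ (Fin 3)} (hx : ‖x‖ = 1)
    (hy : ‖y‖ = 1) (hxy : ⟪x, y⟫_ℝ = 0) (v : EuclideanSpace ℝ (Fin 3)) :
    ⟪x, v⟫_ℝ • x + ⟪y, v⟫_ℝ • y + ⟪cross3 x y, v⟫_ℝ • cross3 x y = v := by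
  have hon := orthonormal_cross3 hx hy hxy
  have hspan : Submodule.span ℝ (Set.range ![x, y, cross3 x y]) = ⊤ :=
    hon.linearIndependent.span_eq_top_of_card_eq_finrank (by simp)
  simpa [Fin.sum_univ_three] using (OrthonormalBasis.mk hon hspan.ge).sum_repr' v

end CrossProduct

section Cone

/-- The unit normal `ξ = β × β'` of the cone over `β` with vertex at the origin. -/
noncomputable def coneNormal (β : ℝ → EuclideanSpace ℝ (Fin 3)) (s : ℝ) :
    EuclideanSpace ℝ (Fin 3) :=
  cross3 (β s) (deriv β s)

/-- The geodesic curvature of a unit-speed curve `β` on the unit sphere, signed with respect to the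
conormal `β × β'`. -/
noncomputable def geodesicCurvature (β : ℝ → EuclideanSpace ℝ (Fin 3)) (s : ℝ) : ℝ :=
  ⟪coneNormal β s, deriv (deriv β) s⟫_ℝ

/-- The Darboux vector `κ β + ξ` of the frame `(β, β', ξ)`, that is, the axis of the circle
osculating `β` at `s`. -/
noncomputable def osculatingAxis (β : ℝ → EuclideanSpace ℝ (Fin 3)) (s : ℝ) :
    EuclideanSpace ℝ (Fin 3) :=
  geodesicCurvature β s • β s + coneNormal β s

namespace IsUnitSpeedSphericalOn

variable {β : ℝ → EuclideanSpace ℝ (Fin 3)} {I : Set ℝ} {s : ℝ}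

theorem norm_coneNormal_eq_one (h : IsUnitSpeedSphericalOn β I) (hs : s ∈ I) :
    ‖coneNormal β s‖ = 1 :=
  (orthonormal_cross3 (h.norm_eq_one s hs) (h.norm_deriv_eq_one s hs)
    (h.inner_deriv_eq_zero hs)).1 2

theorem inner_osculatingAxis (h : IsUnitSpeedSphericalOn β I) (hs : s ∈ I) :
    ⟪β s, osculatingAxis β s⟫_ℝ = geodesicCurvature β s := by
  simp [osculatingAxis, inner_add_right, inner_smul_right, h.norm_eq_one s hs, coneNormal,
    inner_self_cross3]

theorem norm_osculatingAxis_sq (h : IsUnitSpeedSphericalOn β I) (hs : s ∈ I) :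
    ‖osculatingAxis β s‖ ^ 2 = geodesicCurvature β s ^ 2 + 1 := by
  have horth : ⟪β s, coneNormal β s⟫_ℝ = 0 := inner_self_cross3 _ _
  rw [osculatingAxis, norm_add_sq_real, inner_smul_left, horth, norm_smul, h.norm_eq_one s hs,
    h.norm_coneNormal_eq_one hs]
  simp

theorem osculatingAxis_ne_zero (h : IsUnitSpeedSphericalOn β I) (hs : s ∈ I) :
    osculatingAxis β s ≠ 0 := by
  rw [← norm_ne_zero_iff, ← pow_ne_zero_iff two_ne_zero, h.norm_osculatingAxis_sq hs]
  positivity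

theorem deriv_deriv_eq (h : IsUnitSpeedSphericalOn β I) (hs : s ∈ I) :
    deriv (deriv β) s = -β s + geodesicCurvature β s • coneNormal β s := by
  have hframe := sum_inner_smul_cross3_frame (h.norm_eq_one s hs) (h.norm_deriv_eq_one s hs)
    (h.inner_deriv_eq_zero hs) (deriv (deriv β) s)
  rw [h.inner_deriv_deriv_eq_neg_one hs, h.inner_deriv_deriv_deriv_eq_zero hs, neg_one_smul,
    zero_smul, add_zero] at hframe
  exact hframe.symm

theorem hasDerivAt_coneNormal (h : IsUnitSpeedSphericalOn β I) (hs : s ∈ I) :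
    HasDerivAt (coneNormal β) (-geodesicCurvature β s • deriv β s) s := by
  have hcross : cross3 (β s) (coneNormal β s) = -deriv β s := by
    rw [coneNormal, cross3_cross3, h.inner_deriv_eq_zero hs, real_inner_self_eq_norm_sq,
      h.norm_eq_one s hs]
    simp
  refine (hasDerivAt_cross3 (h.hasDerivAt hs) (h.hasDerivAt_deriv hs)).congr_deriv ?_
  rw [h.deriv_deriv_eq hs, isBilinearMap_cross3.add_right, isBilinearMap_cross3.smul_right,
    hcross, ← neg_one_smul ℝ (β s), isBilinearMap_cross3.smul_right, cross3_self, cross3_self]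
  simp

theorem continuousOn_geodesicCurvature (h : IsUnitSpeedSphericalOn β I) :
    ContinuousOn (geodesicCurvature β) I :=
  ContinuousOn.inner (fun _ hs => (h.hasDerivAt_coneNormal hs).continuousAt.continuousWithinAt)
    h.continuousOn_deriv_deriv

section ConstantGeodesicCurvature

variable {k : ℝ}

theorem hasDerivAt_osculatingAxis (h : IsUnitSpeedSphericalOn β I)
    (hk : ∀ t ∈ I, geodesicCurvature β t = k) (hs : s ∈ I) :
    HasDerivAt (osculatingAxis β) 0 s := by
  have hderiv : HasDerivAt (fun t => k • β t + coneNormal β t) 0 s := by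
    refine (((h.hasDerivAt hs).const_smul k).add (h.hasDerivAt_coneNormal hs)).congr_deriv ?_
    rw [hk s hs, neg_smul, add_neg_cancel]
  refine hderiv.congr_of_eventuallyEq ?_
  filter_upwards [h.isOpen.mem_nhds hs] with t ht
  rw [osculatingAxis, hk t ht]

theorem exists_ne_zero_inner_eq_of_geodesicCurvature_eq (h : IsUnitSpeedSphericalOn β I)
    (hI : IsConnected I) (hk : ∀ t ∈ I, geodesicCurvature β t = k) :
    ∃ e ≠ 0, ∀ s ∈ I, ⟪β s, e⟫_ℝ = k := by
  obtain ⟨s₀, hs₀⟩ := hI.nonempty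
  refine ⟨osculatingAxis β s₀, h.osculatingAxis_ne_zero hs₀, fun s hs => ?_⟩
  have haxis : osculatingAxis β s₀ = osculatingAxis β s :=
    h.isOpen.is_const_of_deriv_eq_zero hI.isPreconnected
      (fun t ht => (h.hasDerivAt_osculatingAxis hk ht).differentiableAt.differentiableWithinAt)
      (fun t ht => (h.hasDerivAt_osculatingAxis hk ht).deriv) hs₀ hs
  rw [haxis, h.inner_osculatingAxis hs, hk s hs]

end ConstantGeodesicCurvature

section ConstantAngle

variable {d : EuclideanSpace ℝ (Fin 3)} {C : ℝ}

theorem geodesicCurvature_mul_inner_deriv_eq_zero (h : IsUnitSpeedSphericalOn β I)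
    (hC : ∀ t ∈ I, ⟪coneNormal β t, d⟫_ℝ = C) (hs : s ∈ I) :
    geodesicCurvature β s * ⟪deriv β s, d⟫_ℝ = 0 := by
  have hzero := hasDerivAt_eq_zero_of_eventuallyEq_const
    (hasDerivAt_inner_const (h.hasDerivAt_coneNormal hs) d)
    (eventually_of_mem (h.isOpen.mem_nhds hs) hC)
  rwa [inner_smul_left, conj_trivial, neg_mul, neg_eq_zero] at hzero

theorem eventually_inner_deriv_eq_zero (h : IsUnitSpeedSphericalOn β I)
    (hC : ∀ t ∈ I, ⟪coneNormal β t, d⟫_ℝ = C) (hs : s ∈ I) (hκ : geodesicCurvature β s ≠ 0) :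
    ∀ᶠ t in 𝓝 s, ⟪deriv β t, d⟫_ℝ = 0 := by
  have hI : I ∈ 𝓝 s := h.isOpen.mem_nhds hs
  filter_upwards [hI, (h.continuousOn_geodesicCurvature.continuousAt hI).eventually_ne hκ]
    with t ht hκt
  exact (mul_eq_zero.1 (h.geodesicCurvature_mul_inner_deriv_eq_zero hC ht)).resolve_left hκt

theorem inner_eq_geodesicCurvature_mul (h : IsUnitSpeedSphericalOn β I)
    (hC : ∀ t ∈ I, ⟪coneNormal β t, d⟫_ℝ = C) (hs : s ∈ I) (hκ : geodesicCurvature β s ≠ 0) :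
    ⟪β s, d⟫_ℝ = geodesicCurvature β s * C := by
  have hzero := hasDerivAt_eq_zero_of_eventuallyEq_const
    (hasDerivAt_inner_const (h.hasDerivAt_deriv hs) d) (h.eventually_inner_deriv_eq_zero hC hs hκ)
  rw [h.deriv_deriv_eq hs, inner_add_left, inner_neg_left, inner_smul_left, conj_trivial,
    hC s hs] at hzero
  linarith

theorem smul_osculatingAxis_eq (h : IsUnitSpeedSphericalOn β I)
    (hC : ∀ t ∈ I, ⟪coneNormal β t, d⟫_ℝ = C) (hs : s ∈ I) (hκ : geodesicCurvature β s ≠ 0) :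
    C • osculatingAxis β s = d := by
  have hframe := sum_inner_smul_cross3_frame (h.norm_eq_one s hs) (h.norm_deriv_eq_one s hs)
    (h.inner_deriv_eq_zero hs) d
  rw [← coneNormal, hC s hs, (h.eventually_inner_deriv_eq_zero hC hs hκ).self_of_nhds,
    h.inner_eq_geodesicCurvature_mul hC hs hκ, zero_smul, add_zero] at hframe
  rw [osculatingAxis, smul_add, smul_smul, mul_comm C, hframe]

theorem geodesicCurvature_sq_add_one_mul_sq (h : IsUnitSpeedSphericalOn β I)
    (hC : ∀ t ∈ I, ⟪coneNormal β t, d⟫_ℝ = C) (hs : s ∈ I) (hκ : geodesicCurvature β s ≠ 0) :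
    (geodesicCurvature β s ^ 2 + 1) * C ^ 2 = ‖d‖ ^ 2 := by
  rw [← h.smul_osculatingAxis_eq hC hs hκ, norm_smul, mul_pow, h.norm_osculatingAxis_sq hs,
    Real.norm_eq_abs, sq_abs, mul_comm]

theorem geodesicCurvature_eq_of_inner_coneNormal_eq (h : IsUnitSpeedSphericalOn β I)
    (hI : IsPreconnected I) (hd : d ≠ 0) (hC : ∀ t ∈ I, ⟪coneNormal β t, d⟫_ℝ = C) {t : ℝ}
    (hs : s ∈ I) (ht : t ∈ I) : geodesicCurvature β s = geodesicCurvature β t :=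
  hI.constant_of_mapsTo
    (finite_setOf_ne_zero_imp_sq_add_one_mul_eq (pow_ne_zero 2 (norm_ne_zero_iff.2 hd))).isDiscrete
    h.continuousOn_geodesicCurvature
    (fun _ hu => h.geodesicCurvature_sq_add_one_mul_sq hC hu) hs ht

end ConstantAngle

end IsUnitSpeedSphericalOn

end Cone

/-- If for a C² unit-speed curve `β` on the unit sphere of `ℝ³` the
function `⟪β × β', d⟫` is constant for some `d ≠ 0`, then `β` is an arc of a circle on the
sphere: `⟪β, e⟫` is constant for some `e ≠ 0`. -/
theorem constant_angle_cone_is_circular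
    (I : Set ℝ) (hIopen : IsOpen I) (hIne : I.Nonempty) (hIconv : Convex ℝ I)
    (β : ℝ → EuclideanSpace ℝ (Fin 3)) (d : EuclideanSpace ℝ (Fin 3)) (hd : d ≠ 0)
    (hC2 : ContDiffOn ℝ 2 β I)
    (hsph : ∀ s ∈ I, ‖β s‖ = 1)
    (hunit : ∀ s ∈ I, ‖deriv β s‖ = 1)
    (hconst : ∃ C : ℝ, ∀ s ∈ I, ⟪cross3 (β s) (deriv β s), d⟫_ℝ = C) :
    ∃ e : EuclideanSpace ℝ (Fin 3), e ≠ 0 ∧ ∃ c : ℝ, ∀ s ∈ I, ⟪β s, e⟫_ℝ = c := by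
  obtain ⟨C, hC⟩ := hconst
  obtain ⟨s₀, hs₀⟩ := hIne
  have hβ : IsUnitSpeedSphericalOn β I := ⟨hIopen, hC2, hsph, hunit⟩
  have hI : IsConnected I := ⟨⟨s₀, hs₀⟩, hIconv.isPreconnected⟩
  have hκ : ∀ s ∈ I, geodesicCurvature β s = geodesicCurvature β s₀ := fun s hs =>
    hβ.geodesicCurvature_eq_of_inner_coneNormal_eq hI.isPreconnected hd hC hs hs₀
  obtain ⟨e, he, hinner⟩ := hβ.exists_ne_zero_inner_eq_of_geodesicCurvature_eq hI hκ
  exact ⟨e, he, geodesicCurvature β s₀, hinner⟩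
end

section
/- Let α: I → ℝ³ be a C² unit-speed curve on a nonempty open interval I ⊆ ℝ that is rectifying with vertex p ∈ ℝ³ and satisfies α''(s) ≠ 0 for all s ∈ I. Suppose α is a slant helix: there exists a unit vector d ∈ ℝ³ such that s ↦ ⟨α''(s), d⟩/‖α''(s)‖ is constant on I. Then the cone containing α is circular: there exist a unit vector e ∈ ℝ³ and a constant c ∈ ℝ such that ⟨α(s) − p, e⟩ = c·‖α(s) − p‖ for all s ∈ I. -/
open scoped InnerProductSpace

/-!
Let `T` and `A` be the velocity and acceleration of the curve, `r = α - p`, and split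
`r = ⟪r, T⟫ • T + w` with `w ⟂ T`. Since `r ⟂ A`, one finds `⟪r, T⟫' = 1` and
`w' = -⟪r, T⟫ • A`; hence `‖w‖` is a positive constant and `T`, `w`, `A` is an orthogonal frame.
The slant condition fixes the length of the `A`-component of `d`, hence also the length of the
projection `⟪T, d⟫ • T + (⟪w, d⟫ / ‖w‖ ^ 2) • w`. Differentiating that length gives
`‖w‖ ^ 2 * ⟪T, d⟫ = ⟪r, T⟫ * ⟪w, d⟫`, provided `⟪A, d⟫ ≠ 0`; if `⟪A, d⟫` vanishes identically, the
projection is `d` itself, and differentiating it as a vector gives the same. This identity says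
exactly that `⟪r, d⟫ / ‖r‖` has derivative zero, so the axis of the cone is `d`.
-/

open Module

theorem sum_inner_div_norm_sq_smul_eq_self {𝕜 E ι : Type*} [RCLike 𝕜] [NormedAddCommGroup E]
    [InnerProductSpace 𝕜 E] [Fintype ι] [Nonempty ι] {v : ι → E} (hne : ∀ i, v i ≠ 0)
    (horth : Pairwise fun i j => ⟪v i, v j⟫_𝕜 = 0) (hcard : Fintype.card ι = finrank 𝕜 E) (x : E) :
    ∑ i, (⟪v i, x⟫_𝕜 / (‖v i‖ : 𝕜) ^ 2) • v i = x := by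
  have hli : LinearIndependent 𝕜 v := linearIndependent_of_ne_zero_of_inner_eq_zero hne horth
  refine InnerProductSpace.ext_inner_left_basis
    (basisOfLinearIndependentOfCardEqFinrank hli hcard) fun i => ?_
  have hnorm : (‖v i‖ : 𝕜) ^ 2 ≠ 0 := by simpa using hne i
  rw [coe_basisOfLinearIndependentOfCardEqFinrank, inner_sum,
    Finset.sum_eq_single i (fun j _ hj => by rw [inner_smul_right, horth hj.symm, mul_zero])
      (by simp),
    inner_smul_right, inner_self_eq_norm_sq_to_K, div_mul_cancel₀ _ hnorm]

theorem eq_zero_of_hasDerivAt_of_eqOn_const {𝕜 F : Type*} [NontriviallyNormedField 𝕜]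
    [NormedAddCommGroup F] [NormedSpace 𝕜 F] {I : Set 𝕜} {f : 𝕜 → F} {f' c : F} {s : 𝕜}
    (hI : IsOpen I) (hs : s ∈ I) (hconst : ∀ t ∈ I, f t = c) (hf : HasDerivAt f f' s) :
    f' = 0 :=
  hf.unique <| (hasDerivAt_const s c).congr_of_eventuallyEq <|
    Filter.eventually_of_mem (hI.mem_nhds hs) hconst

variable {E : Type*} [NormedAddCommGroup E] [InnerProductSpace ℝ E]

theorem inner_eq_zero_of_hasDerivAt_of_norm_eqOn_const {I : Set ℝ} {f : ℝ → E} {f' : E} {c s : ℝ}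
    (hI : IsOpen I) (hs : s ∈ I) (hnorm : ∀ t ∈ I, ‖f t‖ = c) (hf : HasDerivAt f f' s) :
    ⟪f s, f'⟫_ℝ = 0 :=
  (mul_eq_zero_iff_left two_ne_zero).mp <|
    eq_zero_of_hasDerivAt_of_eqOn_const (c := c ^ 2) hI hs (fun t ht => by rw [hnorm t ht])
      hf.norm_sq

theorem hasDerivAt_inner_div_norm {r : ℝ → E} {v : E} {s : ℝ} (hr : HasDerivAt r v s)
    (hne : r s ≠ 0) (d : E) :
    HasDerivAt (fun t => ⟪r t, d⟫_ℝ / ‖r t‖)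
      ((‖r s‖ ^ 2 * ⟪v, d⟫_ℝ - ⟪r s, v⟫_ℝ * ⟪r s, d⟫_ℝ) / ‖r s‖ ^ 3) s := by
  have hnorm : ‖r s‖ ≠ 0 := norm_ne_zero_iff.mpr hne
  have hinner : HasDerivAt (fun t => ⟪r t, d⟫_ℝ) ⟪v, d⟫_ℝ s := by
    simpa using hr.inner ℝ (hasDerivAt_const s d)
  have hlength : HasDerivAt (fun t => ‖r t‖) (⟪r s, v⟫_ℝ / ‖r s‖) s := by
    have hsqrt := hr.norm_sq.sqrt (pow_ne_zero 2 hnorm)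
    simp only [Real.sqrt_sq (norm_nonneg _)] at hsqrt
    exact hsqrt.congr_deriv (mul_div_mul_left _ _ two_ne_zero)
  refine (hinner.div hlength hnorm).congr_deriv ?_
  field_simp

/-- A twice differentiable unit-speed curve `α` on `I` is rectifying with vertex `p` if its position
vector relative to `p` is orthogonal to its acceleration. Only meaningful for open `I`, since
`deriv` looks at a full neighbourhood. -/
structure IsRectifyingOn (α : ℝ → E) (p : E) (I : Set ℝ) : Prop where
  differentiableAt : ∀ s ∈ I, DifferentiableAt ℝ α s
  differentiableAt_deriv : ∀ s ∈ I, DifferentiableAt ℝ (deriv α) s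
  norm_deriv : ∀ s ∈ I, ‖deriv α s‖ = 1
  inner_sub_vertex_acceleration : ∀ s ∈ I, ⟪α s - p, deriv (deriv α) s⟫_ℝ = 0

/-- The coordinate along the velocity of the position vector of a unit-speed curve, relative to
the vertex `p`. -/
noncomputable def tangentialCoord (α : ℝ → E) (p : E) (s : ℝ) : ℝ :=
  ⟪α s - p, deriv α s⟫_ℝ

/-- The component orthogonal to the velocity of the position vector of a unit-speed curve, relative
to the vertex `p`. For a rectifying curve in `ℝ³` it points along the binormal. -/
noncomputable def normalComponent (α : ℝ → E) (p : E) (s : ℝ) : E :=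
  α s - p - tangentialCoord α p s • deriv α s

theorem tangentialCoord_smul_add_normalComponent (α : ℝ → E) (p : E) (s : ℝ) :
    tangentialCoord α p s • deriv α s + normalComponent α p s = α s - p :=
  add_sub_cancel _ _

namespace IsRectifyingOn

variable {α : ℝ → E} {p : E} {I : Set ℝ} {s : ℝ} {d : E}

theorem of_contDiffOn (hI : IsOpen I) (hα : ContDiffOn ℝ 2 α I)
    (hunit : ∀ s ∈ I, ‖deriv α s‖ = 1)
    (hrect : ∀ s ∈ I, ⟪α s - p, deriv (deriv α) s⟫_ℝ = 0) : IsRectifyingOn α p I where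
  differentiableAt _ hs := (hα.differentiableOn two_ne_zero).differentiableAt (hI.mem_nhds hs)
  differentiableAt_deriv _ hs :=
    ((hα.deriv_of_isOpen hI one_add_one_eq_two.le).differentiableOn one_ne_zero).differentiableAt
      (hI.mem_nhds hs)
  norm_deriv := hunit
  inner_sub_vertex_acceleration := hrect

theorem inner_deriv_self (h : IsRectifyingOn α p I) (hs : s ∈ I) :
    ⟪deriv α s, deriv α s⟫_ℝ = 1 := by
  rw [real_inner_self_eq_norm_sq, h.norm_deriv s hs, one_pow]

theorem hasDerivAt_sub_vertex (h : IsRectifyingOn α p I) (hs : s ∈ I) :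
    HasDerivAt (fun t => α t - p) (deriv α s) s :=
  (h.differentiableAt s hs).hasDerivAt.sub_const p

theorem hasDerivAt_tangentialCoord (h : IsRectifyingOn α p I) (hs : s ∈ I) :
    HasDerivAt (tangentialCoord α p) 1 s := by
  refine ((h.hasDerivAt_sub_vertex hs).inner ℝ
    (h.differentiableAt_deriv s hs).hasDerivAt).congr_deriv ?_
  rw [h.inner_sub_vertex_acceleration s hs, h.inner_deriv_self hs, zero_add]

theorem hasDerivAt_normalComponent (h : IsRectifyingOn α p I) (hs : s ∈ I) :
    HasDerivAt (normalComponent α p) (-(tangentialCoord α p s • deriv (deriv α) s)) s := by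
  refine ((h.hasDerivAt_sub_vertex hs).sub ((h.hasDerivAt_tangentialCoord hs).smul
    (h.differentiableAt_deriv s hs).hasDerivAt)).congr_deriv ?_
  module

theorem inner_deriv_normalComponent (h : IsRectifyingOn α p I) (hs : s ∈ I) :
    ⟪deriv α s, normalComponent α p s⟫_ℝ = 0 := by
  rw [normalComponent, inner_sub_right, inner_smul_right, h.inner_deriv_self hs, mul_one,
    real_inner_comm, tangentialCoord, sub_self]

theorem inner_deriv_acceleration (h : IsRectifyingOn α p I) (hI : IsOpen I) (hs : s ∈ I) :
    ⟪deriv α s, deriv (deriv α) s⟫_ℝ = 0 :=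
  inner_eq_zero_of_hasDerivAt_of_norm_eqOn_const hI hs h.norm_deriv
    (h.differentiableAt_deriv s hs).hasDerivAt

theorem inner_normalComponent_acceleration (h : IsRectifyingOn α p I) (hI : IsOpen I)
    (hs : s ∈ I) : ⟪normalComponent α p s, deriv (deriv α) s⟫_ℝ = 0 := by
  rw [normalComponent, inner_sub_left, inner_smul_left, h.inner_sub_vertex_acceleration s hs,
    h.inner_deriv_acceleration hI hs, mul_zero, sub_zero]

theorem exists_norm_normalComponent_sq_eq (h : IsRectifyingOn α p I) (hI : IsOpen I)
    (hI' : IsPreconnected I) : ∃ q : ℝ, ∀ s ∈ I, ‖normalComponent α p s‖ ^ 2 = q := by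
  have hderiv : ∀ s ∈ I, HasDerivAt (fun t => ‖normalComponent α p t‖ ^ 2) 0 s := fun s hs =>
    (h.hasDerivAt_normalComponent hs).norm_sq.congr_deriv <| by
      rw [inner_neg_right, inner_smul_right, h.inner_normalComponent_acceleration hI hs, mul_zero,
        neg_zero, mul_zero]
  exact hI.exists_is_const_of_deriv_eq_zero hI'
    (fun s hs => (hderiv s hs).differentiableAt.differentiableWithinAt)
    fun s hs => (hderiv s hs).deriv

theorem normalComponent_ne_zero (h : IsRectifyingOn α p I) (hI : IsOpen I)
    (hI' : IsPreconnected I) (hacc : ∀ s ∈ I, deriv (deriv α) s ≠ 0) (hs : s ∈ I) :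
    normalComponent α p s ≠ 0 := by
  intro hzero
  obtain ⟨q, hq⟩ := h.exists_norm_normalComponent_sq_eq hI hI'
  have hnormal : ∀ t ∈ I, normalComponent α p t = 0 := fun t ht => by
    simpa [hzero] using (hq t ht).trans (hq s hs).symm
  have htangential : ∀ t ∈ I, tangentialCoord α p t = 0 := fun t ht => by
    have hsmul := eq_zero_of_hasDerivAt_of_eqOn_const hI ht hnormal
      (h.hasDerivAt_normalComponent ht)
    exact (smul_eq_zero.mp (neg_eq_zero.mp hsmul)).resolve_right (hacc t ht)
  exact one_ne_zero <|
    eq_zero_of_hasDerivAt_of_eqOn_const hI hs htangential (h.hasDerivAt_tangentialCoord hs)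

theorem frame_expansion (h : IsRectifyingOn α p I) (hdim : finrank ℝ E = 3) (hI : IsOpen I)
    (hI' : IsPreconnected I) (hacc : ∀ s ∈ I, deriv (deriv α) s ≠ 0) (hs : s ∈ I) (d : E) :
    ⟪deriv α s, d⟫_ℝ • deriv α s
      + (⟪normalComponent α p s, d⟫_ℝ / ‖normalComponent α p s‖ ^ 2) • normalComponent α p s
      + (⟪deriv (deriv α) s, d⟫_ℝ / ‖deriv (deriv α) s‖ ^ 2) • deriv (deriv α) s = d := by
  have hTw := h.inner_deriv_normalComponent hs
  have hTA := h.inner_deriv_acceleration hI hs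
  have hwA := h.inner_normalComponent_acceleration hI hs
  have hT : deriv α s ≠ 0 := fun hzero => by simpa [hzero] using h.norm_deriv s hs
  have hw := h.normalComponent_ne_zero hI hI' hacc hs
  have hne : ∀ i, ![deriv α s, normalComponent α p s, deriv (deriv α) s] i ≠ 0 := by
    simp [Fin.forall_fin_succ, hT, hw, hacc s hs]
  have horth : Pairwise fun i j => ⟪![deriv α s, normalComponent α p s, deriv (deriv α) s] i,
      ![deriv α s, normalComponent α p s, deriv (deriv α) s] j⟫_ℝ = 0 := by
    intro i j hij
    fin_cases i <;> fin_cases j <;> simp_all [real_inner_comm]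
  have hsum := sum_inner_div_norm_sq_smul_eq_self hne horth (by simp [hdim]) d
  simpa [Fin.sum_univ_three, h.norm_deriv s hs] using hsum

theorem frame_sum_sq_eq_norm_sq (h : IsRectifyingOn α p I) (hdim : finrank ℝ E = 3) (hI : IsOpen I)
    (hI' : IsPreconnected I) (hacc : ∀ s ∈ I, deriv (deriv α) s ≠ 0) (hs : s ∈ I) (d : E) :
    ⟪deriv α s, d⟫_ℝ ^ 2 + ⟪normalComponent α p s, d⟫_ℝ ^ 2 / ‖normalComponent α p s‖ ^ 2
      + (⟪deriv (deriv α) s, d⟫_ℝ / ‖deriv (deriv α) s‖) ^ 2 = ‖d‖ ^ 2 := by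
  have hinner := congrArg (fun x => ⟪x, d⟫_ℝ) (h.frame_expansion hdim hI hI' hacc hs d)
  simp only [inner_add_left, real_inner_smul_left, real_inner_self_eq_norm_sq] at hinner
  rw [← hinner]
  ring

theorem hasDerivAt_inner_deriv (h : IsRectifyingOn α p I) (hs : s ∈ I) (d : E) :
    HasDerivAt (fun t => ⟪deriv α t, d⟫_ℝ) ⟪deriv (deriv α) s, d⟫_ℝ s := by
  simpa using (h.differentiableAt_deriv s hs).hasDerivAt.inner ℝ (hasDerivAt_const s d)

theorem hasDerivAt_inner_normalComponent (h : IsRectifyingOn α p I) (hs : s ∈ I) (d : E) :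
    HasDerivAt (fun t => ⟪normalComponent α p t, d⟫_ℝ)
      (-(tangentialCoord α p s * ⟪deriv (deriv α) s, d⟫_ℝ)) s := by
  simpa [real_inner_smul_left] using
    (h.hasDerivAt_normalComponent hs).inner ℝ (hasDerivAt_const s d)

theorem norm_sq_mul_inner_deriv_eq_of_inner_acceleration_ne_zero (h : IsRectifyingOn α p I)
    (hdim : finrank ℝ E = 3) (hI : IsOpen I) (hI' : IsPreconnected I)
    (hacc : ∀ s ∈ I, deriv (deriv α) s ≠ 0) {C : ℝ}
    (hslant : ∀ s ∈ I, ⟪deriv (deriv α) s, d⟫_ℝ / ‖deriv (deriv α) s‖ = C)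
    (hs : s ∈ I) (hd : ⟪deriv (deriv α) s, d⟫_ℝ ≠ 0) :
    ‖normalComponent α p s‖ ^ 2 * ⟪deriv α s, d⟫_ℝ =
      tangentialCoord α p s * ⟪normalComponent α p s, d⟫_ℝ := by
  obtain ⟨q, hq⟩ := h.exists_norm_normalComponent_sq_eq hI hI'
  have hq0 : q ≠ 0 := by
    simpa [← hq s hs] using h.normalComponent_ne_zero hI hI' hacc hs
  have hconst : ∀ t ∈ I, ⟪deriv α t, d⟫_ℝ ^ 2 + ⟪normalComponent α p t, d⟫_ℝ ^ 2 / q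
      = ‖d‖ ^ 2 - C ^ 2 := fun t ht => by
    have hsum := h.frame_sum_sq_eq_norm_sq hdim hI hI' hacc ht d
    rw [hslant t ht, hq t ht] at hsum
    exact eq_sub_of_add_eq hsum
  have hzero := eq_zero_of_hasDerivAt_of_eqOn_const hI hs hconst
    (((h.hasDerivAt_inner_deriv hs d).pow 2).add
      (((h.hasDerivAt_inner_normalComponent hs d).pow 2).div_const q))
  rw [hq s hs]
  apply mul_left_cancel₀ hd
  field_simp at hzero
  linear_combination hzero / 2

theorem norm_sq_mul_inner_deriv_eq_of_inner_acceleration_eq_zero (h : IsRectifyingOn α p I)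
    (hdim : finrank ℝ E = 3) (hI : IsOpen I) (hI' : IsPreconnected I)
    (hacc : ∀ s ∈ I, deriv (deriv α) s ≠ 0) (hd : ∀ s ∈ I, ⟪deriv (deriv α) s, d⟫_ℝ = 0)
    (hs : s ∈ I) :
    ‖normalComponent α p s‖ ^ 2 * ⟪deriv α s, d⟫_ℝ =
      tangentialCoord α p s * ⟪normalComponent α p s, d⟫_ℝ := by
  obtain ⟨q, hq⟩ := h.exists_norm_normalComponent_sq_eq hI hI'
  have hq0 : q ≠ 0 := by
    simpa [← hq s hs] using h.normalComponent_ne_zero hI hI' hacc hs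
  have hconst : ∀ t ∈ I, ⟪deriv α t, d⟫_ℝ • deriv α t
      + (⟪normalComponent α p t, d⟫_ℝ / q) • normalComponent α p t = d := fun t ht => by
    simpa [hd t ht, hq t ht] using h.frame_expansion hdim hI hI' hacc ht d
  have hzero := eq_zero_of_hasDerivAt_of_eqOn_const hI hs hconst
    (((h.hasDerivAt_inner_deriv hs d).smul (h.differentiableAt_deriv s hs).hasDerivAt).add
      (((h.hasDerivAt_inner_normalComponent hs d).div_const q).smul
        (h.hasDerivAt_normalComponent hs)))
  have hsmul : (⟪deriv α s, d⟫_ℝ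
      - ⟪normalComponent α p s, d⟫_ℝ / q * tangentialCoord α p s) • deriv (deriv α) s = 0 := by
    rw [← hzero, hd s hs]
    module
  have hcoeff := (smul_eq_zero.mp hsmul).resolve_right (hacc s hs)
  rw [hq s hs]
  field_simp at hcoeff
  linear_combination hcoeff

theorem norm_sq_mul_inner_deriv_eq (h : IsRectifyingOn α p I) (hdim : finrank ℝ E = 3)
    (hI : IsOpen I) (hI' : IsPreconnected I) (hacc : ∀ s ∈ I, deriv (deriv α) s ≠ 0) {C : ℝ}
    (hslant : ∀ s ∈ I, ⟪deriv (deriv α) s, d⟫_ℝ / ‖deriv (deriv α) s‖ = C) (hs : s ∈ I) :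
    ‖normalComponent α p s‖ ^ 2 * ⟪deriv α s, d⟫_ℝ =
      tangentialCoord α p s * ⟪normalComponent α p s, d⟫_ℝ := by
  have hinner : ∀ t ∈ I, ⟪deriv (deriv α) t, d⟫_ℝ = C * ‖deriv (deriv α) t‖ := fun t ht =>
    (div_eq_iff (norm_ne_zero_iff.mpr (hacc t ht))).mp (hslant t ht)
  rcases eq_or_ne C 0 with rfl | hC
  · exact h.norm_sq_mul_inner_deriv_eq_of_inner_acceleration_eq_zero hdim hI hI' hacc
      (fun t ht => by rw [hinner t ht, zero_mul]) hs
  · refine h.norm_sq_mul_inner_deriv_eq_of_inner_acceleration_ne_zero hdim hI hI' hacc hslant hs ?_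
    rw [hinner s hs]
    exact mul_ne_zero hC (norm_ne_zero_iff.mpr (hacc s hs))

theorem norm_sub_vertex_sq (h : IsRectifyingOn α p I) (hs : s ∈ I) :
    ‖α s - p‖ ^ 2 = tangentialCoord α p s ^ 2 + ‖normalComponent α p s‖ ^ 2 := by
  rw [← tangentialCoord_smul_add_normalComponent, norm_add_sq_real, real_inner_smul_left,
    h.inner_deriv_normalComponent hs, norm_smul, h.norm_deriv s hs, Real.norm_eq_abs, mul_one,
    sq_abs, mul_zero, mul_zero, add_zero]

theorem sub_vertex_ne_zero (h : IsRectifyingOn α p I) (hI : IsOpen I) (hI' : IsPreconnected I)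
    (hacc : ∀ s ∈ I, deriv (deriv α) s ≠ 0) (hs : s ∈ I) : α s - p ≠ 0 := by
  have hw := norm_pos_iff.mpr (h.normalComponent_ne_zero hI hI' hacc hs)
  rw [← norm_ne_zero_iff, ← sq_pos_iff, h.norm_sub_vertex_sq hs]
  positivity

theorem hasDerivAt_zero_inner_div_norm_sub_vertex (h : IsRectifyingOn α p I)
    (hdim : finrank ℝ E = 3) (hI : IsOpen I) (hI' : IsPreconnected I)
    (hacc : ∀ s ∈ I, deriv (deriv α) s ≠ 0) {C : ℝ}
    (hslant : ∀ s ∈ I, ⟪deriv (deriv α) s, d⟫_ℝ / ‖deriv (deriv α) s‖ = C) (hs : s ∈ I) :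
    HasDerivAt (fun t => ⟪α t - p, d⟫_ℝ / ‖α t - p‖) 0 s := by
  refine (hasDerivAt_inner_div_norm (h.hasDerivAt_sub_vertex hs)
    (h.sub_vertex_ne_zero hI hI' hacc hs) d).congr_deriv ?_
  have hinner : ⟪α s - p, d⟫_ℝ =
      tangentialCoord α p s * ⟪deriv α s, d⟫_ℝ + ⟪normalComponent α p s, d⟫_ℝ := by
    rw [← tangentialCoord_smul_add_normalComponent, inner_add_left, real_inner_smul_left]
  rw [div_eq_zero_iff, ← tangentialCoord, hinner, h.norm_sub_vertex_sq hs]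
  left
  linear_combination h.norm_sq_mul_inner_deriv_eq hdim hI hI' hacc hslant hs

end IsRectifyingOn

theorem rectifying_slant_helix_on_circular_cone_general (hdim : finrank ℝ E = 3) {I : Set ℝ}
    (hI : IsOpen I) (hI' : IsPreconnected I) {α : ℝ → E} {p : E} (hα : IsRectifyingOn α p I)
    (hacc : ∀ s ∈ I, deriv (deriv α) s ≠ 0) {d : E} {C : ℝ}
    (hslant : ∀ s ∈ I, ⟪deriv (deriv α) s, d⟫_ℝ / ‖deriv (deriv α) s‖ = C) :
    ∃ c : ℝ, ∀ s ∈ I, ⟪α s - p, d⟫_ℝ = c * ‖α s - p‖ := by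
  have hderiv : ∀ s ∈ I, HasDerivAt (fun t => ⟪α t - p, d⟫_ℝ / ‖α t - p‖) 0 s := fun s hs =>
    hα.hasDerivAt_zero_inner_div_norm_sub_vertex hdim hI hI' hacc hslant hs
  obtain ⟨c, hc⟩ := hI.exists_is_const_of_deriv_eq_zero hI'
    (fun s hs => (hderiv s hs).differentiableAt.differentiableWithinAt)
    fun s hs => (hderiv s hs).deriv
  exact ⟨c, fun s hs => (div_eq_iff
    (norm_ne_zero_iff.mpr (hα.sub_vertex_ne_zero hI hI' hacc hs))).mp (hc s hs)⟩

/-- If a C² unit-speed rectifying curve in `ℝ³` (vertex `p`, nowhere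
vanishing acceleration) is a slant helix (its principal normal `α''/‖α''‖` makes a
constant angle with a unit vector `d`), then the cone containing it is circular: there
are a unit vector `e` and a constant `c` with `⟪α - p, e⟫ = c‖α - p‖` on `I`. -/
theorem rectifying_slant_helix_on_circular_cone
    (I : Set ℝ) (hIopen : IsOpen I) (hIne : I.Nonempty) (hIconv : Convex ℝ I)
    (α : ℝ → EuclideanSpace ℝ (Fin 3)) (p : EuclideanSpace ℝ (Fin 3))
    (hC2 : ContDiffOn ℝ 2 α I)
    (hunit : ∀ s ∈ I, ‖deriv α s‖ = 1)
    (hrect : ∀ s ∈ I, ⟪α s - p, deriv (deriv α) s⟫_ℝ = 0)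
    (hacc : ∀ s ∈ I, deriv (deriv α) s ≠ 0)
    (d : EuclideanSpace ℝ (Fin 3)) (hd : ‖d‖ = 1)
    (hslant : ∃ C : ℝ, ∀ s ∈ I, ⟪deriv (deriv α) s, d⟫_ℝ / ‖deriv (deriv α) s‖ = C) :
    ∃ e : EuclideanSpace ℝ (Fin 3), ‖e‖ = 1 ∧
      ∃ c : ℝ, ∀ s ∈ I, ⟪α s - p, e⟫_ℝ = c * ‖α s - p‖ := by
  obtain ⟨C, hC⟩ := hslant
  exact ⟨d, hd, rectifying_slant_helix_on_circular_cone_general finrank_euclideanSpace_fin hIopen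
    hIconv.isPreconnected (.of_contDiffOn hIopen hC2 hunit hrect) hacc hC⟩
end

section
/- Let m ≥ 1, let U ⊆ ℝᵐ be a nonempty open connected set, and let β: U → ℝ^{m+2} be a C¹ map with ‖β(t)‖ = 1 for all t ∈ U and with the partial derivatives ∂₁β(t), …, ∂ₘβ(t) linearly independent at every t ∈ U (an immersed hypersurface of the unit sphere). Suppose there are d ∈ ℝ^{m+2} and c ∈ ℝ with ⟨β(t), d⟩ = c for all t ∈ U (β lies in a small sphere, so the cone over β is a circular hypercone). Let ξ: U → ℝ^{m+2} be a differentiable map with ‖ξ(t)‖ = 1, ⟨ξ(t), β(t)⟩ = 0 and ⟨ξ(t), ∂ᵢβ(t)⟩ = 0 for all t ∈ U and all i ∈ {1, …, m} (the unit normal of the hypercone along β). Then the function t ↦ ⟨ξ(t), d⟩ is constant on U. -/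
open scoped InnerProductSpace

/-!
Differentiating `‖β‖ = 1` and `⟪β, d⟫ = c` shows that `β t` and `d` are orthogonal to the tangent
space of `β` at `t`, as is `ξ t`. The orthogonal complement of that tangent space is a plane with
orthonormal basis `β t`, `ξ t`, so Parseval's identity gives `⟪ξ t, d⟫ ^ 2 = ‖d‖ ^ 2 - c ^ 2`.
Hence `⟪ξ, d⟫` is continuous with constant absolute value, and on a connected set it cannot jump
between the two possible signs.
-/

open Module Set

lemma range_eq_span_range_apply_basis {R M N ι : Type*} [Semiring R] [AddCommMonoid M]
    [AddCommMonoid N] [Module R M] [Module R N] (f : M →ₗ[R] N) (b : Basis ι R M) :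
    f.range = Submodule.span R (range fun i ↦ f (b i)) := by
  rw [LinearMap.range_eq_map, ← b.span_eq, Submodule.map_span, ← range_comp]
  rfl

section LinearAlgebra

variable {𝕜 E ι : Type*} [RCLike 𝕜] [NormedAddCommGroup E] [InnerProductSpace 𝕜 E]

lemma sum_sq_norm_inner_eq_of_card_eq_finrank [Fintype ι] [Nonempty ι] {K : Submodule 𝕜 E}
    {v : ι → E} (hv : Orthonormal 𝕜 v) (hvK : ∀ i, v i ∈ K)
    (hcard : Fintype.card ι = finrank 𝕜 K) {x : E} (hx : x ∈ K) :
    ∑ i, ‖inner 𝕜 (v i) x‖ ^ 2 = ‖x‖ ^ 2 := by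
  have hvK' := hv.codRestrict K hvK
  let b : OrthonormalBasis ι 𝕜 K :=
    (basisOfOrthonormalOfCardEqFinrank hvK' hcard).toOrthonormalBasis (by simpa using hvK')
  have hb : ∀ i, (b i : E) = v i := fun i ↦ by simp [b]
  simpa [hb] using b.sum_sq_norm_inner_right ⟨x, hx⟩

lemma mem_orthogonal_span_range_iff {v : ι → E} {x : E} :
    x ∈ (Submodule.span 𝕜 (range v))ᗮ ↔ ∀ i, inner 𝕜 x (v i) = 0 := by
  rw [← Submodule.span_singleton_le_iff_mem, ← Submodule.isOrtho_iff_le, Submodule.isOrtho_span]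
  simp

lemma card_add_finrank_orthogonal_span_range [Fintype ι] [FiniteDimensional 𝕜 E] {v : ι → E}
    (hv : LinearIndependent 𝕜 v) :
    Fintype.card ι + finrank 𝕜 (Submodule.span 𝕜 (range v))ᗮ = finrank 𝕜 E := by
  rw [← finrank_span_eq_card hv, Submodule.finrank_add_finrank_orthogonal]

section Basis

variable {M : Type*} [AddCommGroup M] [Module 𝕜 M] (b : Basis ι 𝕜 M) {f : M →ₗ[𝕜] E}

lemma mem_orthogonal_range_iff_inner_apply_basis {x : E} :
    x ∈ f.rangeᗮ ↔ ∀ i, inner 𝕜 x (f (b i)) = 0 := by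
  rw [range_eq_span_range_apply_basis f b, mem_orthogonal_span_range_iff]

lemma card_add_finrank_orthogonal_range_of_linearIndependent [Fintype ι] [FiniteDimensional 𝕜 E]
    (hf : LinearIndependent 𝕜 fun i ↦ f (b i)) :
    Fintype.card ι + finrank 𝕜 f.rangeᗮ = finrank 𝕜 E := by
  rw [range_eq_span_range_apply_basis f b, card_add_finrank_orthogonal_span_range hf]

end Basis

end LinearAlgebra

lemma exists_forall_eq_of_abs_eq_const {X α : Type*} [TopologicalSpace X] [AddCommGroup α]
    [LinearOrder α] [TopologicalSpace α] [T1Space α] {S : Set X} (hS : IsPreconnected S)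
    {f : X → α} (hf : ContinuousOn f S) {a : α} (habs : ∀ x ∈ S, |f x| = a) :
    ∃ b, ∀ x ∈ S, f x = b := by
  have hmaps : MapsTo f S {a, -a} := fun x hx ↦ eq_or_eq_neg_of_abs_eq (habs x hx)
  obtain ⟨b, -, hb⟩ :=
    hS.eqOn_const_of_mapsTo (toFinite _).isDiscrete hf hmaps (insert_nonempty _ _)
  exact ⟨b, hb⟩

lemma hasFDerivWithinAt_eq_zero_of_eq_const {𝕜 E F : Type*} [NontriviallyNormedField 𝕜]
    [NormedAddCommGroup E] [NormedSpace 𝕜 E] [NormedAddCommGroup F] [NormedSpace 𝕜 F]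
    {f : E → F} {f' : E →L[𝕜] F} {s : Set E} {x : E} {c : F}
    (hf : HasFDerivWithinAt f f' s x) (hs : UniqueDiffWithinAt 𝕜 s x) (hx : x ∈ s)
    (hc : ∀ y ∈ s, f y = c) : f' = 0 :=
  hs.eq hf ((hasFDerivWithinAt_const c x s).congr hc (hc x hx))

section Hypercone

variable {E F : Type*} [NormedAddCommGroup E] [NormedSpace ℝ E]
  [NormedAddCommGroup F] [InnerProductSpace ℝ F]

section Derivative

variable {f : E → F} {f' : E →L[ℝ] F} {s : Set E} {x : E}

lemma mem_orthogonal_range_of_inner_eq_const (hf : HasFDerivWithinAt f f' s x)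
    (hs : UniqueDiffWithinAt ℝ s x) (hx : x ∈ s) {d : F} {c : ℝ}
    (hc : ∀ y ∈ s, ⟪f y, d⟫_ℝ = c) : d ∈ f'.rangeᗮ := by
  have hderiv : (innerSL ℝ d).comp f' = 0 :=
    hasFDerivWithinAt_eq_zero_of_eq_const ((innerSL ℝ d).hasFDerivAt.comp_hasFDerivWithinAt x hf)
      hs hx fun y hy ↦ (real_inner_comm _ _).trans (hc y hy)
  rw [Submodule.mem_orthogonal']
  rintro _ ⟨v, rfl⟩
  exact DFunLike.congr_fun hderiv v

lemma mem_orthogonal_range_of_norm_eq_const (hf : HasFDerivWithinAt f f' s x)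
    (hs : UniqueDiffWithinAt ℝ s x) (hx : x ∈ s) {r : ℝ}
    (hr : ∀ y ∈ s, ‖f y‖ = r) : f x ∈ f'.rangeᗮ := by
  have hderiv : 2 • (innerSL ℝ (f x)).comp f' = 0 :=
    hasFDerivWithinAt_eq_zero_of_eq_const (c := r ^ 2) hf.norm_sq hs hx fun y hy ↦ by simp [hr y hy]
  rw [Submodule.mem_orthogonal']
  rintro _ ⟨v, rfl⟩
  simpa using DFunLike.congr_fun hderiv v

end Derivative

lemma sq_inner_add_sq_inner_eq_norm_sq {K : Submodule ℝ F} (hK : finrank ℝ K = 2) {b x d : F}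
    (hb : ‖b‖ = 1) (hx : ‖x‖ = 1) (hbx : ⟪b, x⟫_ℝ = 0) (hbK : b ∈ K) (hxK : x ∈ K) (hdK : d ∈ K) :
    ⟪b, d⟫_ℝ ^ 2 + ⟪x, d⟫_ℝ ^ 2 = ‖d‖ ^ 2 := by
  have hon : Orthonormal ℝ ![b, x] := by simp [hb, hx, hbx]
  have hmem : ∀ i, ![b, x] i ∈ K := by simp [Fin.forall_fin_two, hbK, hxK]
  simpa using sum_sq_norm_inner_eq_of_card_eq_finrank hon hmem (by simp [hK]) hdK

theorem circular_hypercone_constant_angle_general {U : Set E} (hU : UniqueDiffOn ℝ U)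
    (hUconn : IsPreconnected U) {β ξ : E → F} {β' : E → E →L[ℝ] F}
    (hβ : ∀ t ∈ U, HasFDerivWithinAt β (β' t) U t) (hβnorm : ∀ t ∈ U, ‖β t‖ = 1)
    (hcodim : ∀ t ∈ U, finrank ℝ (β' t).rangeᗮ = 2)
    {d : F} {c : ℝ} (hβd : ∀ t ∈ U, ⟪β t, d⟫_ℝ = c)
    (hξ : ContinuousOn ξ U) (hξnorm : ∀ t ∈ U, ‖ξ t‖ = 1) (hξβ : ∀ t ∈ U, ⟪ξ t, β t⟫_ℝ = 0)
    (hξtang : ∀ t ∈ U, ξ t ∈ (β' t).rangeᗮ) :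
    ∃ C : ℝ, ∀ t ∈ U, ⟪ξ t, d⟫_ℝ = C := by
  have hparseval : ∀ t ∈ U, c ^ 2 + ⟪ξ t, d⟫_ℝ ^ 2 = ‖d‖ ^ 2 := fun t ht ↦ by
    have hβperp := mem_orthogonal_range_of_norm_eq_const (hβ t ht) (hU t ht) ht hβnorm
    have hdperp := mem_orthogonal_range_of_inner_eq_const (hβ t ht) (hU t ht) ht hβd
    rw [← hβd t ht]
    exact sq_inner_add_sq_inner_eq_norm_sq (hcodim t ht) (hβnorm t ht) (hξnorm t ht)
      ((real_inner_comm _ _).trans (hξβ t ht)) hβperp (hξtang t ht) hdperp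
  have habs : ∀ t ∈ U, |⟪ξ t, d⟫_ℝ| = √(‖d‖ ^ 2 - c ^ 2) := fun t ht ↦ by
    rw [← hparseval t ht, add_sub_cancel_left, Real.sqrt_sq_eq_abs]
  exact exists_forall_eq_of_abs_eq_const hUconn (hξ.inner continuousOn_const) habs

end Hypercone

/-- Let `β : U → ℝ^{m+2}` (`U ⊆ ℝᵐ` open, connected, nonempty) be a C¹
immersed hypersurface of the unit sphere lying in a small sphere `⟪β, d⟫ = c`, and let `ξ`
be the unit normal of the hypercone over `β` along `β` (unit, orthogonal to `β` and to all
partial derivatives `∂ᵢβ`). Then `⟪ξ, d⟫` is constant on `U`: a circular hypercone makes a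
constant angle with its axis. -/
theorem circular_hypercone_constant_angle
    (m : ℕ) (hm : 1 ≤ m)
    (U : Set (EuclideanSpace ℝ (Fin m))) (hUopen : IsOpen U) (hUconn : IsConnected U)
    (β ξ : EuclideanSpace ℝ (Fin m) → EuclideanSpace ℝ (Fin (m + 2)))
    (hβC1 : ContDiffOn ℝ 1 β U)
    (hβsph : ∀ t ∈ U, ‖β t‖ = 1)
    (hβimm : ∀ t ∈ U,
      LinearIndependent ℝ (fun i : Fin m => fderiv ℝ β t (EuclideanSpace.single i 1)))
    (d : EuclideanSpace ℝ (Fin (m + 2))) (c : ℝ)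
    (hsmall : ∀ t ∈ U, ⟪β t, d⟫_ℝ = c)
    (hξdiff : DifferentiableOn ℝ ξ U)
    (hξunit : ∀ t ∈ U, ‖ξ t‖ = 1)
    (hξβ : ∀ t ∈ U, ⟪ξ t, β t⟫_ℝ = 0)
    (hξtang : ∀ t ∈ U, ∀ i : Fin m,
      ⟪ξ t, fderiv ℝ β t (EuclideanSpace.single i 1)⟫_ℝ = 0) :
    ∃ C : ℝ, ∀ t ∈ U, ⟪ξ t, d⟫_ℝ = C := by
  let e := (EuclideanSpace.basisFun (Fin m) ℝ).toBasis
  have hderiv : ∀ t ∈ U, HasFDerivWithinAt β (fderiv ℝ β t) U t := fun t ht ↦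
    ((hβC1.differentiableOn one_ne_zero).hasFDerivAt (hUopen.mem_nhds ht)).hasFDerivWithinAt
  have hcodim : ∀ t ∈ U, finrank ℝ (fderiv ℝ β t).rangeᗮ = 2 := fun t ht ↦ by
    simpa using card_add_finrank_orthogonal_range_of_linearIndependent e
      (f := (fderiv ℝ β t).toLinearMap) (by simpa [e] using hβimm t ht)
  have hξperp : ∀ t ∈ U, ξ t ∈ (fderiv ℝ β t).rangeᗮ := fun t ht ↦
    (mem_orthogonal_range_iff_inner_apply_basis e).2 (by simpa [e] using hξtang t ht)
  exact circular_hypercone_constant_angle_general hUopen.uniqueDiffOn hUconn.isPreconnected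
    hderiv hβsph hcodim hsmall hξdiff.continuousOn hξunit hξβ hξperp
end

section
/- Let α: I → ℝ^{m+2} (m ≥ 1) be a C² unit-speed curve on a nonempty open interval I ⊆ ℝ, p ∈ ℝ^{m+2}, d a unit vector, and c ∈ (−1, 1). Assume: (i) α(s) ≠ p and ⟨α(s) − p, d⟩ = c·‖α(s) − p‖ for all s ∈ I (α lies on the circular hypercone with vertex p and axis d); (ii) α''(s) ≠ 0 for all s; and (iii) for each s ∈ I the vector α''(s) is a scalar multiple of d − c·(α(s) − p)/‖α(s) − p‖ (α is a geodesic of the circular hypercone: its acceleration is parallel to the hypercone's normal). Then the function s ↦ ⟨α''(s), d⟩/‖α''(s)‖ is constant on I with absolute value √(1 − c²); in particular α is a slant helix with axis d. -/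
open scoped InnerProductSpace

/-!
On the hypercone the normal `N = d - c (q - p) / ‖q - p‖` is orthogonal to the ruling `q - p`, so
`⟪N, d⟫ = ‖N‖²`, and this number is the constant `‖d‖² - c²`. A nonzero multiple of `N` therefore
has component `±√(‖d‖² - c²)` along `d` after normalization. The sign is the one of `⟪α'', d⟫`,
which is the derivative of `⟪α', d⟫` and has no zero, hence has constant sign by Darboux's theorem.
-/

section Hypercone

variable {E : Type*} [NormedAddCommGroup E] [InnerProductSpace ℝ E]

/-- The circular hypercone with vertex `p` and axis direction `d`, without its vertex. The vector
`d` need not be a unit vector: the cosine of the opening angle is `c / ‖d‖`. -/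
def circularHypercone (p d : E) (c : ℝ) : Set E :=
  {q | q ≠ p ∧ ⟪q - p, d⟫_ℝ = c * ‖q - p‖}

/-- The normal direction of `circularHypercone p d c` at `q`, not normalized. -/
noncomputable def hyperconeNormal (p d : E) (c : ℝ) (q : E) : E :=
  d - (c / ‖q - p‖) • (q - p)

variable {p d q : E} {c : ℝ}

lemma inner_hyperconeNormal_sub_vertex (hq : q ∈ circularHypercone p d c) :
    ⟪hyperconeNormal p d c q, q - p⟫_ℝ = 0 := by
  rw [hyperconeNormal, inner_sub_left, real_inner_smul_left, real_inner_comm, hq.2,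
    real_inner_self_eq_norm_sq]
  field_simp
  ring

lemma inner_hyperconeNormal_axis (hq : q ∈ circularHypercone p d c) :
    ⟪hyperconeNormal p d c q, d⟫_ℝ = ‖d‖ ^ 2 - c ^ 2 := by
  have hr : ‖q - p‖ ≠ 0 := norm_ne_zero_iff.mpr (sub_ne_zero.mpr hq.1)
  rw [hyperconeNormal, inner_sub_left, real_inner_smul_left, hq.2, real_inner_self_eq_norm_sq]
  field_simp

lemma inner_hyperconeNormal_axis_eq_norm_sq (hq : q ∈ circularHypercone p d c) :
    ⟪hyperconeNormal p d c q, d⟫_ℝ = ‖hyperconeNormal p d c q‖ ^ 2 := by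
  have hd : d = hyperconeNormal p d c q + (c / ‖q - p‖) • (q - p) := (sub_add_cancel _ _).symm
  calc ⟪hyperconeNormal p d c q, d⟫_ℝ
      = ⟪hyperconeNormal p d c q, hyperconeNormal p d c q + (c / ‖q - p‖) • (q - p)⟫_ℝ := by
        rw [← hd]
    _ = ‖hyperconeNormal p d c q‖ ^ 2 := by
        rw [inner_add_right, real_inner_smul_right, inner_hyperconeNormal_sub_vertex hq, mul_zero,
          add_zero, real_inner_self_eq_norm_sq]

lemma norm_hyperconeNormal (hq : q ∈ circularHypercone p d c) :
    ‖hyperconeNormal p d c q‖ = √(‖d‖ ^ 2 - c ^ 2) := by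
  rw [← inner_hyperconeNormal_axis hq, inner_hyperconeNormal_axis_eq_norm_sq hq,
    Real.sqrt_sq (norm_nonneg _)]

lemma abs_inner_smul_div_norm_of_inner_eq_norm_sq {w : E} {t : ℝ} (hw : ⟪w, d⟫_ℝ = ‖w‖ ^ 2)
    (htw : t • w ≠ 0) : |⟪t • w, d⟫_ℝ / ‖t • w‖| = ‖w‖ := by
  have ht : |t| ≠ 0 := abs_ne_zero.mpr (left_ne_zero_of_smul htw)
  have hw₀ : ‖w‖ ≠ 0 := norm_ne_zero_iff.mpr (right_ne_zero_of_smul htw)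
  rw [real_inner_smul_left, hw, norm_smul, Real.norm_eq_abs, abs_div, abs_mul, abs_mul, abs_abs,
    abs_norm, abs_of_nonneg (sq_nonneg ‖w‖)]
  field_simp

lemma exists_inner_div_norm_eq_of_abs_eq {I : Set ℝ} (hI : Convex ℝ I) {v v' : ℝ → E}
    (hv : ∀ s ∈ I, HasDerivWithinAt v (v' s) I s) {k : ℝ} (hk : 0 ≤ k)
    (habs : ∀ s ∈ I, |⟪v' s, d⟫_ℝ / ‖v' s‖| = k) :
    ∃ C : ℝ, (∀ s ∈ I, ⟪v' s, d⟫_ℝ / ‖v' s‖ = C) ∧ |C| = k := by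
  obtain rfl | hk₀ := hk.eq_or_lt
  · exact ⟨0, fun s hs => abs_eq_zero.mp (habs s hs), abs_zero⟩
  have hderiv : ∀ s ∈ I, HasDerivWithinAt (fun t => ⟪v t, d⟫_ℝ) ⟪v' s, d⟫_ℝ I s := fun s hs => by
    simpa using (hv s hs).inner ℝ (hasDerivWithinAt_const s I d)
  have hne : ∀ s ∈ I, ⟪v' s, d⟫_ℝ ≠ 0 := fun s hs h => by
    simpa [h, hk₀.ne] using habs s hs
  rcases hasDerivWithinAt_forall_lt_or_forall_gt_of_forall_ne hI hderiv hne with hneg | hpos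
  · refine ⟨-k, fun s hs => ?_, by rw [abs_neg, abs_of_nonneg hk]⟩
    rw [← habs s hs, abs_of_nonpos (div_nonpos_of_nonpos_of_nonneg (hneg s hs).le (norm_nonneg _)),
      neg_neg]
  · refine ⟨k, fun s hs => ?_, abs_of_nonneg hk⟩
    rw [← habs s hs, abs_of_nonneg (div_nonneg (hpos s hs).le (norm_nonneg _))]

theorem circular_hypercone_geodesic_is_slant_helix_general {I : Set ℝ} (hI : Convex ℝ I)
    {α α' α'' : ℝ → E} (_hα : ∀ s ∈ I, HasDerivWithinAt α (α' s) I s)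
    (hα' : ∀ s ∈ I, HasDerivWithinAt α' (α'' s) I s)
    (hcone : ∀ s ∈ I, α s ∈ circularHypercone p d c)
    (hacc : ∀ s ∈ I, α'' s ≠ 0)
    (hgeo : ∀ s ∈ I, ∃ lam : ℝ, α'' s = lam • hyperconeNormal p d c (α s)) :
    ∃ C : ℝ, (∀ s ∈ I, ⟪α'' s, d⟫_ℝ / ‖α'' s‖ = C) ∧ |C| = √(‖d‖ ^ 2 - c ^ 2) := by
  refine exists_inner_div_norm_eq_of_abs_eq hI hα' (Real.sqrt_nonneg _) fun s hs => ?_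
  obtain ⟨lam, hlam⟩ := hgeo s hs
  have hsmul : lam • hyperconeNormal p d c (α s) ≠ 0 := hlam ▸ hacc s hs
  rw [hlam, abs_inner_smul_div_norm_of_inner_eq_norm_sq
    (inner_hyperconeNormal_axis_eq_norm_sq (hcone s hs)) hsmul, norm_hyperconeNormal (hcone s hs)]

end Hypercone

/-- A geodesic of a circular hypercone in `ℝ^{m+2}` (vertex `p`, unit
axis `d`, opening cosine `c ∈ (−1,1)`): a unit-speed C² curve `α` on the cone
(`⟪α - p, d⟫ = c‖α - p‖`, `α ≠ p`) with nowhere-vanishing acceleration which is always a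
scalar multiple of the cone normal direction `d − c·(α − p)/‖α − p‖`, is a slant helix
with axis `d`: `⟪α'', d⟫/‖α''‖` is constant of absolute value `√(1 − c²)`. -/
theorem circular_hypercone_geodesic_is_slant_helix
    (m : ℕ) (hm : 1 ≤ m)
    (I : Set ℝ) (hIopen : IsOpen I) (hIne : I.Nonempty) (hIconv : Convex ℝ I)
    (α : ℝ → EuclideanSpace ℝ (Fin (m + 2))) (p : EuclideanSpace ℝ (Fin (m + 2)))
    (hC2 : ContDiffOn ℝ 2 α I)
    (hunit : ∀ s ∈ I, ‖deriv α s‖ = 1)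
    (d : EuclideanSpace ℝ (Fin (m + 2))) (hd : ‖d‖ = 1)
    (c : ℝ) (hc : c ∈ Set.Ioo (-1 : ℝ) 1)
    (hne : ∀ s ∈ I, α s ≠ p)
    (hcone : ∀ s ∈ I, ⟪α s - p, d⟫_ℝ = c * ‖α s - p‖)
    (hacc : ∀ s ∈ I, deriv (deriv α) s ≠ 0)
    (hgeo : ∀ s ∈ I, ∃ lam : ℝ,
      deriv (deriv α) s = lam • (d - (c / ‖α s - p‖) • (α s - p))) :
    ∃ C : ℝ, (∀ s ∈ I, ⟪deriv (deriv α) s, d⟫_ℝ / ‖deriv (deriv α) s‖ = C) ∧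
      |C| = Real.sqrt (1 - c ^ 2) := by
  have hα (s : ℝ) (hs : s ∈ I) : HasDerivWithinAt α (deriv α s) I s :=
    ((hC2.differentiableOn two_ne_zero).differentiableAt
      (hIopen.mem_nhds hs)).hasDerivAt.hasDerivWithinAt
  have hα' (s : ℝ) (hs : s ∈ I) : HasDerivWithinAt (deriv α) (deriv (deriv α) s) I s :=
    (differentiableAt_of_deriv_ne_zero (hacc s hs)).hasDerivAt.hasDerivWithinAt
  simpa only [hd, one_pow] using circular_hypercone_geodesic_is_slant_helix_general hIconv hα hα'
    (fun s hs => ⟨hne s hs, hcone s hs⟩) hacc hgeo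
end

section
/- Let α: I → ℝ^{m+2} (m ≥ 1) be a unit-speed curve on a nonempty open interval I ⊆ ℝ equipped with a twisted Frenet apparatus (N₀, …, N_{m+1}; κ₀, …, κ_m), let p ∈ ℝ^{m+2}, and let j ∈ {0, …, m}. Then α cannot be simultaneously j-rectifying and (j+1)-rectifying with vertex p: it is not the case that ⟨α(s) − p, N_j(s)⟩ = 0 and ⟨α(s) − p, N_{j+1}(s)⟩ = 0 for all s ∈ I. -/
open scoped InnerProductSpace

/-!
Let `A i = ⟪α - p, N i⟫`. The Frenet equations give `A 0' = 1 + κ 0 * A 1` and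
`A i' = -κ (i - 1) * A (i - 1) + κ i * A (i + 1)` for `1 ≤ i`. If `A i` and `A (i + 1)` vanish
identically, so does `A i'`, and since `κ (i - 1) ≠ 0` the second equation makes `A (i - 1)` vanish.
Descending to `A 0 = A 1 = 0` turns the first equation into `0 = 1`.
-/

section General

variable {E : Type*} [NormedAddCommGroup E] [InnerProductSpace ℝ E]
  {I : Set ℝ} {α : ℝ → E} {p : E}

/-- The curve `α` is rectifying on `I` with vertex `p` with respect to the vector field `n`.
For the `j`-th field `n = N j` of a Frenet apparatus, this says that `α` is `j`-rectifying. -/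
def IsRectifyingOn_s14 (α : ℝ → E) (p : E) (n : ℝ → E) (I : Set ℝ) : Prop :=
  ∀ s ∈ I, ⟪α s - p, n s⟫_ℝ = 0

namespace IsRectifyingOn_s14

theorem inner_deriv_add_inner_eq_zero {n : ℝ → E} {α' n' : E} {s : ℝ}
    (h : IsRectifyingOn_s14 α p n I) (hI : UniqueDiffWithinAt ℝ I s) (hs : s ∈ I)
    (hα : HasDerivWithinAt α α' I s) (hn : HasDerivWithinAt n n' I s) :
    ⟪α s - p, n'⟫_ℝ + ⟪α', n s⟫_ℝ = 0 := by
  have hderiv := (hα.sub_const p).inner ℝ hn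
  have hzero : HasDerivWithinAt (fun t => ⟪α t - p, n t⟫_ℝ) 0 I s :=
    (hasDerivWithinAt_const s I (0 : ℝ)).congr h (h s hs)
  exact hI.eq_deriv I hderiv hzero

theorem inner_velocity_eq_zero {n₀ n₁ : ℝ → E} {α' : E} {κ s : ℝ}
    (h₀ : IsRectifyingOn_s14 α p n₀ I) (h₁ : IsRectifyingOn_s14 α p n₁ I)
    (hI : UniqueDiffWithinAt ℝ I s) (hs : s ∈ I) (hα : HasDerivWithinAt α α' I s)
    (hn₀ : HasDerivWithinAt n₀ (κ • n₁ s) I s) :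
    ⟪α', n₀ s⟫_ℝ = 0 := by
  simpa [inner_smul_right, h₁ s hs] using h₀.inner_deriv_add_inner_eq_zero hI hs hα hn₀

theorem of_frenet {n₀ n₁ n₂ α' : ℝ → E} {κ₀ κ₁ : ℝ → ℝ}
    (h₁ : IsRectifyingOn_s14 α p n₁ I) (h₂ : IsRectifyingOn_s14 α p n₂ I) (hI : UniqueDiffOn ℝ I)
    (hα : ∀ s ∈ I, HasDerivWithinAt α (α' s) I s) (horth : ∀ s ∈ I, ⟪α' s, n₁ s⟫_ℝ = 0)
    (hn₁ : ∀ s ∈ I, HasDerivWithinAt n₁ (-κ₀ s • n₀ s + κ₁ s • n₂ s) I s)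
    (hκ₀ : ∀ s ∈ I, κ₀ s ≠ 0) :
    IsRectifyingOn_s14 α p n₀ I := by
  intro s hs
  have hderiv := h₁.inner_deriv_add_inner_eq_zero (hI s hs) hs (hα s hs) (hn₁ s hs)
  have hmul : κ₀ s * ⟪α s - p, n₀ s⟫_ℝ = 0 := by
    simpa [inner_add_right, inner_smul_right, h₂ s hs, horth s hs] using hderiv
  exact (mul_eq_zero.mp hmul).resolve_left (hκ₀ s hs)

end IsRectifyingOn_s14

theorem not_j_and_j_succ_rectifying_general {α' : ℝ → E} {N : ℕ → ℝ → E} {κ : ℕ → ℝ → ℝ} {j : ℕ}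
    (hI : UniqueDiffOn ℝ I) (hα : ∀ s ∈ I, HasDerivWithinAt α (α' s) I s)
    (htangent : ∃ s ∈ I, ⟪α' s, N 0 s⟫_ℝ ≠ 0)
    (hnormal : ∀ i < j, ∀ s ∈ I, ⟪α' s, N (i + 1) s⟫_ℝ = 0)
    (hN_zero : ∀ s ∈ I, HasDerivWithinAt (N 0) (κ 0 s • N 1 s) I s)
    (hN_succ : ∀ i < j, ∀ s ∈ I,
      HasDerivWithinAt (N (i + 1)) (-κ i s • N i s + κ (i + 1) s • N (i + 2) s) I s)
    (hκ : ∀ i < j, ∀ s ∈ I, κ i s ≠ 0) :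
    ¬ (IsRectifyingOn_s14 α p (N j) I ∧ IsRectifyingOn_s14 α p (N (j + 1)) I) := by
  rintro ⟨hj, hj_succ⟩
  induction j with
  | zero =>
    obtain ⟨s, hs, hne⟩ := htangent
    exact hne (hj.inner_velocity_eq_zero hj_succ (hI s hs) hs (hα s hs) (hN_zero s hs))
  | succ k ih =>
    have hk : IsRectifyingOn_s14 α p (N k) I :=
      hj.of_frenet hj_succ hI hα (hnormal k k.lt_succ_self) (hN_succ k k.lt_succ_self)
        (hκ k k.lt_succ_self)
    exact ih (fun i hi => hnormal i (hi.trans k.lt_succ_self))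
      (fun i hi => hN_succ i (hi.trans k.lt_succ_self))
      (fun i hi => hκ i (hi.trans k.lt_succ_self)) hk hj

end General

/-- A unit-speed curve in `ℝ^{m+2}` equipped with a *twisted* Frenet
apparatus `(N 0, …, N (m+1); κ 0, …, κ m)` cannot be simultaneously `j`- and
`(j+1)`-rectifying with vertex `p` for any `0 ≤ j ≤ m`. -/
theorem not_j_and_j_succ_rectifying
    (m : ℕ) (hm : 1 ≤ m)
    (I : Set ℝ) (hIopen : IsOpen I) (hIne : I.Nonempty) (hIconv : Convex ℝ I)
    (α : ℝ → EuclideanSpace ℝ (Fin (m + 2)))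
    (hαdiff : DifferentiableOn ℝ α I)
    (hunit : ∀ s ∈ I, ‖deriv α s‖ = 1)
    (N : ℕ → ℝ → EuclideanSpace ℝ (Fin (m + 2))) (κ : ℕ → ℝ → ℝ)
    (hNC1 : ∀ i ≤ m + 1, ContDiffOn ℝ 1 (N i) I)
    (hON : ∀ s ∈ I, ∀ i ≤ m + 1, ∀ j ≤ m + 1,
      ⟪N i s, N j s⟫_ℝ = if i = j then (1 : ℝ) else 0)
    (hN0 : ∀ s ∈ I, N 0 s = deriv α s)
    (hκcont : ∀ i ≤ m, ContinuousOn (κ i) I)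
    (hF0 : ∀ s ∈ I, deriv (N 0) s = κ 0 s • N 1 s)
    (hFi : ∀ i, 1 ≤ i → i ≤ m → ∀ s ∈ I,
      deriv (N i) s = (-(κ (i - 1) s)) • N (i - 1) s + κ i s • N (i + 1) s)
    (hFlast : ∀ s ∈ I, deriv (N (m + 1)) s = (-(κ m s)) • N m s)
    (htwist : ∀ i ≤ m, ∀ s ∈ I, κ i s ≠ 0)
    (p : EuclideanSpace ℝ (Fin (m + 2))) (j : ℕ) (hj : j ≤ m) :
    ¬ (∀ s ∈ I, ⟪α s - p, N j s⟫_ℝ = 0 ∧ ⟪α s - p, N (j + 1) s⟫_ℝ = 0) := by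
  have hα : ∀ s ∈ I, HasDerivWithinAt α (N 0 s) I s := fun s hs =>
    hN0 s hs ▸ (hαdiff.hasDerivAt (hIopen.mem_nhds hs)).hasDerivWithinAt
  have hN : ∀ i ≤ m + 1, ∀ s ∈ I, HasDerivWithinAt (N i) (deriv (N i) s) I s := fun i hi s hs =>
    (((hNC1 i hi).differentiableOn one_ne_zero).hasDerivAt (hIopen.mem_nhds hs)).hasDerivWithinAt
  have htangent : ∃ s ∈ I, ⟪N 0 s, N 0 s⟫_ℝ ≠ 0 :=
    hIne.imp fun s hs => ⟨hs, by rw [hON s hs 0 (by lia) 0 (by lia)]; simp⟩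
  have hnormal : ∀ i < j, ∀ s ∈ I, ⟪N 0 s, N (i + 1) s⟫_ℝ = 0 := fun i hi s hs => by
    simp [hON s hs 0 (by lia) (i + 1) (by lia)]
  have hN_zero : ∀ s ∈ I, HasDerivWithinAt (N 0) (κ 0 s • N 1 s) I s := fun s hs =>
    hF0 s hs ▸ hN 0 (by lia) s hs
  have hN_succ : ∀ i < j, ∀ s ∈ I,
      HasDerivWithinAt (N (i + 1)) (-κ i s • N i s + κ (i + 1) s • N (i + 2) s) I s :=
    fun i hi s hs => hFi (i + 1) (by lia) (by lia) s hs ▸ hN (i + 1) (by lia) s hs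
  intro h
  exact not_j_and_j_succ_rectifying_general hIopen.uniqueDiffOn hα htangent hnormal hN_zero hN_succ
    (fun i hi => htwist i (by lia)) (forall₂_and.mp h)
end

section
/- Let α: I → ℝ^{m+2} (m ≥ 1) be a unit-speed curve on a nonempty open interval I ⊆ ℝ equipped with a Frenet apparatus (N₀, …, N_{m+1}; κ₀, …, κ_m), let p ∈ ℝ^{m+2}, and let j ∈ {0, …, m}. If α is j-rectifying with vertex p (i.e. Aⱼ ≡ 0, where Aᵢ = ⟨α − p, Nᵢ⟩), then the normal vector field α^{Nⱼ} = Σ_{i=j+1}^{m+1} Aᵢ·Nᵢ has constant length: the function s ↦ Σ_{i=j+1}^{m+1} Aᵢ(s)² is constant on I. -/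
open scoped InnerProductSpace

/-!
Because `α'` is orthogonal to the fields `N i` with `i > j`, the coordinates `A i = ⟪α - p, N i⟫`
satisfy the same tridiagonal system as the frame, so that `(A i ^ 2)' / 2 = q i - q (i - 1)` with
the flux `q i = κ i * A i * A (i + 1)`. Summing over `j < i ≤ m + 1` telescopes: nothing flows out
at the top since the frame ends there, and the inflow `q j` has the factor `A j = 0`.
-/

section Tridiagonal

variable {𝕜 : Type*} [NontriviallyNormedField 𝕜] {A : ℕ → 𝕜 → 𝕜} {k : ℕ → 𝕜} {s : 𝕜} {j n : ℕ}

theorem hasDerivAt_sum_Ioc_sq_of_tridiagonal (hjn : j ≤ n)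
    (hA : ∀ i, j ≤ i → i < n →
      HasDerivAt (A (i + 1)) (-k i * A i s + k (i + 1) * A (i + 2) s) s) :
    HasDerivAt (fun t ↦ ∑ i ∈ Finset.Ioc j n, A i t ^ 2)
      (2 * (k n * A n s * A (n + 1) s - k j * A j s * A (j + 1) s)) s := by
  induction n, hjn using Nat.le_induction with
  | base => simpa using hasDerivAt_const s (0 : 𝕜)
  | succ n hjn ih =>
    have hsum := ih fun i hji hin ↦ hA i hji (hin.trans n.lt_succ_self)
    have hsq := (hA n hjn n.lt_succ_self).fun_pow 2
    simp only [Finset.sum_Ioc_succ_top hjn]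
    refine (hsum.fun_add hsq).congr_deriv ?_
    push_cast
    ring

theorem hasDerivAt_zero_sum_Ioc_sq_of_tridiagonal (hjn : j ≤ n)
    (hA : ∀ i, j ≤ i → i < n →
      HasDerivAt (A (i + 1)) (-k i * A i s + k (i + 1) * A (i + 2) s) s)
    (hlast : HasDerivAt (A (n + 1)) (-k n * A n s) s) (hj : A j s = 0) :
    HasDerivAt (fun t ↦ ∑ i ∈ Finset.Ioc j (n + 1), A i t ^ 2) 0 s := by
  have hsum := hasDerivAt_sum_Ioc_sq_of_tridiagonal hjn hA
  simp only [Finset.sum_Ioc_succ_top hjn]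
  refine (hsum.fun_add (hlast.fun_pow 2)).congr_deriv ?_
  rw [hj]
  push_cast
  ring

end Tridiagonal

section Frame

variable {E : Type*} [NormedAddCommGroup E] [InnerProductSpace ℝ E]

/-- The coordinate function `A i = ⟪α - p, N i⟫` of the position vector of the curve `α` relative
to the vertex `p`, along a sequence `N` of vector fields on `α`. -/
def frameCoord (α : ℝ → E) (p : E) (N : ℕ → ℝ → E) (i : ℕ) (s : ℝ) : ℝ :=
  ⟪α s - p, N i s⟫_ℝ

variable {α : ℝ → E} {N : ℕ → ℝ → E}

theorem hasDerivAt_frameCoord {T V : E} {s : ℝ} {i : ℕ} (hα : HasDerivAt α T s)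
    (hN : HasDerivAt (N i) V s) (horth : ⟪T, N i s⟫_ℝ = 0) (p : E) :
    HasDerivAt (frameCoord α p N i) ⟪α s - p, V⟫_ℝ s :=
  ((hα.sub_const p).inner ℝ hN).congr_deriv (by rw [horth, add_zero])

theorem hasDerivAt_zero_sum_Ioc_frameCoord_sq {T p : E} {k : ℕ → ℝ} {s : ℝ} {j m : ℕ}
    (hjm : j ≤ m) (hα : HasDerivAt α T s)
    (horth : ∀ i, j ≤ i → i ≤ m → ⟪T, N (i + 1) s⟫_ℝ = 0)
    (hN : ∀ i, j ≤ i → i < m →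
      HasDerivAt (N (i + 1)) (-k i • N i s + k (i + 1) • N (i + 2) s) s)
    (hlast : HasDerivAt (N (m + 1)) (-k m • N m s) s) (hrect : frameCoord α p N j s = 0) :
    HasDerivAt (fun t ↦ ∑ i ∈ Finset.Ioc j (m + 1), frameCoord α p N i t ^ 2) 0 s := by
  refine hasDerivAt_zero_sum_Ioc_sq_of_tridiagonal (k := k) hjm (fun i hji him ↦ ?_) ?_ hrect
  · have h := hasDerivAt_frameCoord hα (hN i hji him) (horth i hji him.le) p
    rwa [inner_add_right, inner_smul_right, inner_smul_right] at h
  · have h := hasDerivAt_frameCoord hα hlast (horth m hjm le_rfl) p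
    rwa [inner_smul_right] at h

theorem j_rectifying_normal_component_const_general {I : Set ℝ} (hIopen : IsOpen I)
    (hIconn : IsPreconnected I) (hα : DifferentiableOn ℝ α I) {κ : ℕ → ℝ → ℝ} {j m : ℕ}
    (hjm : j ≤ m) (hN : ∀ i, j ≤ i → i ≤ m → DifferentiableOn ℝ (N (i + 1)) I)
    (horth : ∀ s ∈ I, ∀ i, j ≤ i → i ≤ m → ⟪deriv α s, N (i + 1) s⟫_ℝ = 0)
    (hF : ∀ i, j ≤ i → i < m → ∀ s ∈ I,
      deriv (N (i + 1)) s = -κ i s • N i s + κ (i + 1) s • N (i + 2) s)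
    (hFlast : ∀ s ∈ I, deriv (N (m + 1)) s = -κ m s • N m s)
    (p : E) (hrect : ∀ s ∈ I, ⟪α s - p, N j s⟫_ℝ = 0) :
    ∃ C : ℝ, ∀ s ∈ I, ∑ i ∈ Finset.Icc (j + 1) (m + 1), ⟪α s - p, N i s⟫_ℝ ^ 2 = C := by
  have hderiv : ∀ s ∈ I,
      HasDerivAt (fun t ↦ ∑ i ∈ Finset.Ioc j (m + 1), frameCoord α p N i t ^ 2) 0 s := by
    intro s hs
    have hI := hIopen.mem_nhds hs
    have hNs : ∀ i, j ≤ i → i ≤ m → HasDerivAt (N (i + 1)) (deriv (N (i + 1)) s) s :=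
      fun i hji him ↦ ((hN i hji him).differentiableAt hI).hasDerivAt
    exact hasDerivAt_zero_sum_Ioc_frameCoord_sq (k := fun i ↦ κ i s) hjm
      (hα.differentiableAt hI).hasDerivAt (horth s hs)
      (fun i hji him ↦ hF i hji him s hs ▸ hNs i hji him.le)
      (hFlast s hs ▸ hNs m hjm le_rfl) (hrect s hs)
  rw [Finset.Icc_add_one_left_eq_Ioc]
  exact hIopen.exists_is_const_of_deriv_eq_zero hIconn
    (fun s hs ↦ (hderiv s hs).differentiableAt.differentiableWithinAt)
    (fun s hs ↦ (hderiv s hs).deriv)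

end Frame

/-- If a unit-speed curve in `ℝ^{m+2}` with a Frenet apparatus is
`j`-rectifying with vertex `p` (`⟪α - p, N j⟫ ≡ 0`, `0 ≤ j ≤ m`), then the normal vector
field `α^{N_j} = Σ_{i=j+1}^{m+1} A i • N i` has constant length:
`Σ_{i=j+1}^{m+1} (A i)²` is constant on `I`, where `A i = ⟪α - p, N i⟫`. -/
theorem j_rectifying_normal_component_const
    (m : ℕ) (hm : 1 ≤ m)
    (I : Set ℝ) (hIopen : IsOpen I) (hIne : I.Nonempty) (hIconv : Convex ℝ I)
    (α : ℝ → EuclideanSpace ℝ (Fin (m + 2)))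
    (hαdiff : DifferentiableOn ℝ α I)
    (hunit : ∀ s ∈ I, ‖deriv α s‖ = 1)
    (N : ℕ → ℝ → EuclideanSpace ℝ (Fin (m + 2))) (κ : ℕ → ℝ → ℝ)
    (hNC1 : ∀ i ≤ m + 1, ContDiffOn ℝ 1 (N i) I)
    (hON : ∀ s ∈ I, ∀ i ≤ m + 1, ∀ j ≤ m + 1,
      ⟪N i s, N j s⟫_ℝ = if i = j then (1 : ℝ) else 0)
    (hN0 : ∀ s ∈ I, N 0 s = deriv α s)
    (hκcont : ∀ i ≤ m, ContinuousOn (κ i) I)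
    (hF0 : ∀ s ∈ I, deriv (N 0) s = κ 0 s • N 1 s)
    (hFi : ∀ i, 1 ≤ i → i ≤ m → ∀ s ∈ I,
      deriv (N i) s = (-(κ (i - 1) s)) • N (i - 1) s + κ i s • N (i + 1) s)
    (hFlast : ∀ s ∈ I, deriv (N (m + 1)) s = (-(κ m s)) • N m s)
    (p : EuclideanSpace ℝ (Fin (m + 2))) (j : ℕ) (hj : j ≤ m)
    (hrect : ∀ s ∈ I, ⟪α s - p, N j s⟫_ℝ = 0) :
    ∃ C : ℝ, ∀ s ∈ I,
      ∑ i ∈ Finset.Icc (j + 1) (m + 1), (⟪α s - p, N i s⟫_ℝ) ^ 2 = C :=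
  j_rectifying_normal_component_const_general hIopen hIconv.isPreconnected hαdiff hj
    (fun i _ him ↦ (hNC1 (i + 1) (by omega)).differentiableOn one_ne_zero)
    (fun s hs i _ him ↦ by simp [← hN0 s hs, hON s hs 0 (by omega) (i + 1) (by omega)])
    (fun i _ him ↦ hFi (i + 1) (by omega) him) hFlast p hrect
end

section
/- Let α: I → ℝ^{m+2} (m ≥ 1) be a unit-speed curve on a nonempty open interval I ⊆ ℝ equipped with a Frenet apparatus (N₀, …, N_{m+1}; κ₀, …, κ_m), let p ∈ ℝ^{m+2}, and let j ∈ {0, …, m}. Assume κⱼ(s) ≠ 0 for all s ∈ I (which holds in particular when α is twisted) and that A_{j+1}(s) ≠ 0 for all s ∈ I, where Aᵢ = ⟨α − p, Nᵢ⟩. If the function s ↦ Σ_{i=j+1}^{m+1} Aᵢ(s)² is constant on I (the normal vector field α^{Nⱼ} = Σ_{i=j+1}^{m+1} Aᵢ·Nᵢ has constant length), then α is j-rectifying with vertex p: Aⱼ(s) = 0 for all s ∈ I. -/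
open scoped InnerProductSpace

/-!
Since `α' = N₀` is orthogonal to `N_i` for `i ≥ 1`, the coordinates `A_i = ⟪α - p, N_i⟫` with
`i ≥ 1` satisfy the same differential equations as the `N_i`. These are skew-symmetric and
tridiagonal, so in the derivative of `A_{j+1}² + ⋯ + A_{m+1}²` the contributions of neighbouring
coordinates cancel in pairs. Only the coupling between `j` and `j + 1` survives:
`(A_{j+1}² + ⋯ + A_{m+1}²)' = -2 κ_j A_j A_{j+1}`.
If the sum is constant and `κ_j`, `A_{j+1}` do not vanish, then `A_j` must.
-/

theorem hasDerivAt_sum_sq_of_skew_tridiagonal {𝕜 R : Type*} [NontriviallyNormedField 𝕜]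
    [NormedCommRing R] [NormedAlgebra 𝕜 R] {A : ℕ → 𝕜 → R} {c : ℕ → R} {x : 𝕜} {j m : ℕ}
    (hj : j ≤ m)
    (hA : ∀ i, j ≤ i → i < m →
      HasDerivAt (A (i + 1)) (-(c i * A i x) + c (i + 1) * A (i + 2) x) x)
    (hAlast : HasDerivAt (A (m + 1)) (-(c m * A m x)) x) :
    HasDerivAt (fun t ↦ ∑ i ∈ Finset.Icc (j + 1) (m + 1), A i t ^ 2)
      (-(2 * c j * A j x * A (j + 1) x)) x := by
  induction hj using Nat.decreasingInduction with
  | self =>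
    simp only [Finset.Icc_self, Finset.sum_singleton]
    exact (hAlast.fun_pow 2).congr_deriv (by ring)
  | of_succ j hjm ih =>
    have htail := ih fun i hi ↦ hA i (by lia)
    have hhead := (hA j le_rfl hjm).fun_pow 2
    simp only [← Finset.insert_Icc_add_one_left_eq_Icc (show j + 1 ≤ m + 1 by lia),
      Finset.sum_insert (show j + 1 ∉ Finset.Icc (j + 1 + 1) (m + 1) by simp)]
    exact (hhead.fun_add htail).congr_deriv (by ring)

section Curve

variable {E : Type*} [NormedAddCommGroup E] [InnerProductSpace ℝ E]

theorem hasDerivAt_inner_sub_const_of_inner_eq_zero {α V : ℝ → E} {α' V' : E} {s : ℝ} (p : E)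
    (hα : HasDerivAt α α' s) (hV : HasDerivAt V V' s) (hαV : ⟪α', V s⟫_ℝ = 0) :
    HasDerivAt (fun t ↦ ⟪α t - p, V t⟫_ℝ) ⟪α s - p, V'⟫_ℝ s :=
  ((hα.sub_const p).inner ℝ hV).congr_deriv (by rw [hαV, add_zero])

theorem hasDerivAt_sum_sq_inner_of_frenet {α : ℝ → E} {α' : E} {N : ℕ → ℝ → E} {κ : ℕ → ℝ}
    {s : ℝ} {j m : ℕ} (p : E) (hj : j ≤ m) (hα : HasDerivAt α α' s)
    (horth : ∀ i, j ≤ i → i ≤ m → ⟪α', N (i + 1) s⟫_ℝ = 0)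
    (hN : ∀ i, j ≤ i → i < m →
      HasDerivAt (N (i + 1)) (-κ i • N i s + κ (i + 1) • N (i + 2) s) s)
    (hNlast : HasDerivAt (N (m + 1)) (-κ m • N m s) s) :
    HasDerivAt (fun t ↦ ∑ i ∈ Finset.Icc (j + 1) (m + 1), ⟪α t - p, N i t⟫_ℝ ^ 2)
      (-(2 * κ j * ⟪α s - p, N j s⟫_ℝ * ⟪α s - p, N (j + 1) s⟫_ℝ)) s := by
  refine hasDerivAt_sum_sq_of_skew_tridiagonal (A := fun i t ↦ ⟪α t - p, N i t⟫_ℝ) hj ?_ ?_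
  · intro i hji him
    refine (hasDerivAt_inner_sub_const_of_inner_eq_zero p hα (hN i hji him)
      (horth i hji him.le)).congr_deriv ?_
    simp only [inner_add_right, real_inner_smul_right, neg_mul]
  · refine (hasDerivAt_inner_sub_const_of_inner_eq_zero p hα hNlast
      (horth m hj le_rfl)).congr_deriv ?_
    simp only [real_inner_smul_right, neg_mul]

theorem j_rectifying_of_normal_component_const_general {α : ℝ → E} {N : ℕ → ℝ → E}
    {κ : ℕ → ℝ → ℝ} {I : Set ℝ} {j m : ℕ} {C : ℝ} (p : E) (hI : IsOpen I) (hj : j ≤ m)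
    (hα : DifferentiableOn ℝ α I)
    (hN : ∀ i, j ≤ i → i ≤ m → DifferentiableOn ℝ (N (i + 1)) I)
    (horth : ∀ s ∈ I, ∀ i, j ≤ i → i ≤ m → ⟪deriv α s, N (i + 1) s⟫_ℝ = 0)
    (hF : ∀ i, j ≤ i → i < m → ∀ s ∈ I,
      deriv (N (i + 1)) s = -κ i s • N i s + κ (i + 1) s • N (i + 2) s)
    (hFlast : ∀ s ∈ I, deriv (N (m + 1)) s = -κ m s • N m s)
    (hconst : ∀ s ∈ I, ∑ i ∈ Finset.Icc (j + 1) (m + 1), ⟪α s - p, N i s⟫_ℝ ^ 2 = C)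
    {s : ℝ} (hs : s ∈ I) (hκj : κ j s ≠ 0) (hAj1 : ⟪α s - p, N (j + 1) s⟫_ℝ ≠ 0) :
    ⟪α s - p, N j s⟫_ℝ = 0 := by
  have hIs : I ∈ nhds s := hI.mem_nhds hs
  have hN' (i : ℕ) (hji : j ≤ i) (him : i ≤ m) :
      HasDerivAt (N (i + 1)) (deriv (N (i + 1)) s) s :=
    (hN i hji him).hasDerivAt hIs
  have hderiv := hasDerivAt_sum_sq_inner_of_frenet (κ := fun i ↦ κ i s) p hj
    (hα.hasDerivAt hIs) (horth s hs)
    (fun i hji him ↦ hF i hji him s hs ▸ hN' i hji him.le) (hFlast s hs ▸ hN' m hj le_rfl)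
  have hderiv_zero := (hasDerivAt_const s C).congr_of_eventuallyEq
    (Filter.eventually_of_mem hIs hconst)
  have hprod := hderiv.unique hderiv_zero
  simpa [hκj, hAj1] using hprod

end Curve

/-- Converse of Statement 15: if `κ j` never vanishes on `I`,
`A (j+1) = ⟪α - p, N (j+1)⟫` never vanishes on `I`, and
`Σ_{i=j+1}^{m+1} (A i)²` is constant on `I`, then the unit-speed Frenet curve `α` is
`j`-rectifying with vertex `p`: `⟪α - p, N j⟫ ≡ 0` on `I`. -/
theorem j_rectifying_of_normal_component_const
    (m : ℕ) (hm : 1 ≤ m)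
    (I : Set ℝ) (hIopen : IsOpen I) (hIne : I.Nonempty) (hIconv : Convex ℝ I)
    (α : ℝ → EuclideanSpace ℝ (Fin (m + 2)))
    (hαdiff : DifferentiableOn ℝ α I)
    (hunit : ∀ s ∈ I, ‖deriv α s‖ = 1)
    (N : ℕ → ℝ → EuclideanSpace ℝ (Fin (m + 2))) (κ : ℕ → ℝ → ℝ)
    (hNC1 : ∀ i ≤ m + 1, ContDiffOn ℝ 1 (N i) I)
    (hON : ∀ s ∈ I, ∀ i ≤ m + 1, ∀ j ≤ m + 1,
      ⟪N i s, N j s⟫_ℝ = if i = j then (1 : ℝ) else 0)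
    (hN0 : ∀ s ∈ I, N 0 s = deriv α s)
    (hκcont : ∀ i ≤ m, ContinuousOn (κ i) I)
    (hF0 : ∀ s ∈ I, deriv (N 0) s = κ 0 s • N 1 s)
    (hFi : ∀ i, 1 ≤ i → i ≤ m → ∀ s ∈ I,
      deriv (N i) s = (-(κ (i - 1) s)) • N (i - 1) s + κ i s • N (i + 1) s)
    (hFlast : ∀ s ∈ I, deriv (N (m + 1)) s = (-(κ m s)) • N m s)
    (p : EuclideanSpace ℝ (Fin (m + 2))) (j : ℕ) (hj : j ≤ m)
    (hκj : ∀ s ∈ I, κ j s ≠ 0)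
    (hAj1 : ∀ s ∈ I, ⟪α s - p, N (j + 1) s⟫_ℝ ≠ 0)
    (hconst : ∃ C : ℝ, ∀ s ∈ I,
      ∑ i ∈ Finset.Icc (j + 1) (m + 1), (⟪α s - p, N i s⟫_ℝ) ^ 2 = C) :
    ∀ s ∈ I, ⟪α s - p, N j s⟫_ℝ = 0 := by
  obtain ⟨C, hC⟩ := hconst
  exact fun s hs ↦ j_rectifying_of_normal_component_const_general p hIopen hj hαdiff
    (fun i _ him ↦ (hNC1 (i + 1) (by lia)).differentiableOn one_ne_zero)
    (fun t ht i _ him ↦ by simp [← hN0 t ht, hON t ht 0 (by lia) (i + 1) (by lia)])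
    (fun i _ him ↦ hFi (i + 1) (by lia) him) hFlast hC hs (hκj s hs) (hAj1 s hs)
end

section
/- Let α: I → ℝⁿ be a real-analytic unit-speed curve on a nonempty open interval I ⊆ ℝ, p ∈ ℝⁿ, and let V: I → ℝⁿ be a real-analytic vector field with ‖V(s)‖ = 1, ⟨V(s), α'(s)⟩ = 0, and V'(s) a scalar multiple of α'(s) for every s ∈ I (V is a rotation minimizing normal field). If ⟨α(s) − p, V(s)⟩ = 0 for all s ∈ I (α is normal with respect to V), then either α lies in a hyperplane (there exist d ≠ 0 and c ∈ ℝ with ⟨α(s), d⟩ = c for all s ∈ I) or α lies on a sphere (there exist q ∈ ℝⁿ and R > 0 with ‖α(s) − q‖ = R for all s ∈ I). -/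
open scoped InnerProductSpace

/-!
Differentiating `⟪α - p, V⟫ = 0` and using `V ⊥ α'` leaves `⟪α - p, V'⟫ = 0`. As `V'` is a multiple
of `α'`, it vanishes wherever `f := ⟪α - p, α'⟫` does not. The function `f` is analytic, so either
`f = 0` throughout and `‖α - p‖` is constant, or the zeros of `f` are isolated. In the second case
`V' = 0` off a discrete set, hence `V` is a constant `d` and `α` lies in the hyperplane
`⟪x, d⟫ = ⟪p, d⟫`. The degenerate sphere of radius `0` means `α = p`, which also lies in a
hyperplane.
-/

open Filter Set Topology

section PuncturedDerivative

variable {E : Type*} [NormedAddCommGroup E] [NormedSpace ℝ E] {f : ℝ → E}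

theorem hasDerivAt_of_tendsto_deriv {x : ℝ} {e : E} (hc : ContinuousAt f x)
    (hd : ∀ᶠ y in 𝓝[≠] x, DifferentiableAt ℝ f y) (hlim : Tendsto (deriv f) (𝓝[≠] x) (𝓝 e)) :
    HasDerivAt f e x := by
  let s := {y | DifferentiableAt ℝ f y}
  have hdiff : DifferentiableOn ℝ f s := fun y hy => DifferentiableAt.differentiableWithinAt hy
  have hright : HasDerivWithinAt f e (Ici x) x :=
    hasDerivWithinAt_Ici_of_tendsto_deriv hdiff hc.continuousWithinAt
      (nhdsGT_le_nhdsNE x hd) (hlim.mono_left (nhdsGT_le_nhdsNE x))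
  have hleft : HasDerivWithinAt f e (Iic x) x :=
    hasDerivWithinAt_Iic_of_tendsto_deriv hdiff hc.continuousWithinAt
      (nhdsLT_le_nhdsNE x hd) (hlim.mono_left (nhdsLT_le_nhdsNE x))
  simpa only [Iic_union_Ici, hasDerivWithinAt_univ] using hleft.union hright

theorem exists_eq_const_of_hasDerivAt_zero_codiscreteWithin {U : Set ℝ} (hUo : IsOpen U)
    (hUc : IsPreconnected U) (hf : ContinuousOn f U)
    (hf' : ∀ᶠ x in codiscreteWithin U, HasDerivAt f 0 x) : ∃ c, ∀ x ∈ U, f x = c := by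
  have hderiv (x : ℝ) (hx : x ∈ U) : HasDerivAt f 0 x := by
    have hne : ∀ᶠ y in 𝓝[≠] x, HasDerivAt f 0 y := by
      filter_upwards [mem_codiscreteWithin_iff_forall_mem_nhdsNE.1 hf' x hx,
        mem_nhdsWithin_of_mem_nhds (hUo.mem_nhds hx)] with y hy hyU
      exact hy.resolve_right (not_not_intro hyU)
    exact hasDerivAt_of_tendsto_deriv (hf.continuousAt (hUo.mem_nhds hx))
      (hne.mono fun _ hy => hy.differentiableAt)
      (tendsto_const_nhds.congr' (hne.mono fun _ hy => hy.deriv.symm))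
  exact hUo.exists_is_const_of_deriv_eq_zero hUc
    (fun x hx => (hderiv x hx).differentiableAt.differentiableWithinAt)
    (fun x hx => (hderiv x hx).deriv)

end PuncturedDerivative

section RotationMinimizing

variable {E : Type*} [NormedAddCommGroup E] [InnerProductSpace ℝ E]

theorem analyticOnNhd_inner {F : Type*} [NormedAddCommGroup F] [NormedSpace ℝ F] {f g : F → E}
    {U : Set F} (hf : AnalyticOnNhd ℝ f U) (hg : AnalyticOnNhd ℝ g U) :
    AnalyticOnNhd ℝ (fun x => ⟪f x, g x⟫_ℝ) U := fun x hx =>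
  ((innerSL ℝ).analyticAt_bilinear (f x, g x)).comp₂ (hf x hx) (hg x hx)

variable {I : Set ℝ} {α V : ℝ → E} {p : E}

theorem exists_norm_sub_eq_of_inner_deriv_eq_zero (hIo : IsOpen I) (hIc : IsPreconnected I)
    (hα : DifferentiableOn ℝ α I) (h : ∀ s ∈ I, ⟪α s - p, deriv α s⟫_ℝ = 0) :
    ∃ R, ∀ s ∈ I, ‖α s - p‖ = R := by
  have hderiv (s : ℝ) (hs : s ∈ I) : HasDerivAt (fun t => ‖α t - p‖ ^ 2) 0 s := by
    have hαs := (hα.differentiableAt (hIo.mem_nhds hs)).hasDerivAt.sub_const p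
    simpa only [h s hs, mul_zero] using hαs.norm_sq
  obtain ⟨r, hr⟩ := hIo.exists_is_const_of_deriv_eq_zero hIc
    (fun s hs => (hderiv s hs).differentiableAt.differentiableWithinAt)
    (fun s hs => (hderiv s hs).deriv)
  exact ⟨√r, fun s hs => by rw [← hr s hs, Real.sqrt_sq (norm_nonneg _)]⟩

/-- `V` is a rotation minimizing normal field along the curve `α` on `I`, that is, `V` is normal to
`α` and parallel for its normal connection. Neither `V` nor `α'` is normalized to unit length, and
`V` is only required to be differentiable. -/
structure IsRotationMinimizingOn (I : Set ℝ) (α V : ℝ → E) : Prop where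
  differentiableAt : ∀ s ∈ I, DifferentiableAt ℝ V s
  inner_deriv_eq_zero : ∀ s ∈ I, ⟪V s, deriv α s⟫_ℝ = 0
  exists_deriv_eq_smul : ∀ s ∈ I, ∃ lam : ℝ, deriv V s = lam • deriv α s

namespace IsRotationMinimizingOn

theorem inner_sub_deriv_eq_zero (hV : IsRotationMinimizingOn I α V) (hIo : IsOpen I)
    (hnormal : ∀ s ∈ I, ⟪α s - p, V s⟫_ℝ = 0) {s : ℝ} (hs : s ∈ I)
    (hα : DifferentiableAt ℝ α s) : ⟪α s - p, deriv V s⟫_ℝ = 0 := by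
  have hprod := (hα.hasDerivAt.sub_const p).inner ℝ (hV.differentiableAt s hs).hasDerivAt
  have hconst : HasDerivAt (fun t => ⟪α t - p, V t⟫_ℝ) 0 s :=
    (hasDerivAt_const s 0).congr_of_eventuallyEq (eventually_of_mem (hIo.mem_nhds hs) hnormal)
  calc ⟪α s - p, deriv V s⟫_ℝ
      = ⟪α s - p, deriv V s⟫_ℝ + ⟪deriv α s, V s⟫_ℝ := by
        rw [real_inner_comm (V s), hV.inner_deriv_eq_zero s hs, add_zero]
    _ = 0 := hprod.unique hconst

theorem deriv_eq_zero (hV : IsRotationMinimizingOn I α V) (hIo : IsOpen I)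
    (hnormal : ∀ s ∈ I, ⟪α s - p, V s⟫_ℝ = 0) {s : ℝ} (hs : s ∈ I)
    (hα : DifferentiableAt ℝ α s) (hne : ⟪α s - p, deriv α s⟫_ℝ ≠ 0) : deriv V s = 0 := by
  obtain ⟨lam, hlam⟩ := hV.exists_deriv_eq_smul s hs
  have hmul : lam * ⟪α s - p, deriv α s⟫_ℝ = 0 := by
    rw [← real_inner_smul_right, ← hlam, hV.inner_sub_deriv_eq_zero hIo hnormal hs hα]
  rw [hlam, (mul_eq_zero.1 hmul).resolve_right hne, zero_smul]

theorem exists_eq_const (hV : IsRotationMinimizingOn I α V) (hIo : IsOpen I)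
    (hIc : IsPreconnected I) (hα : DifferentiableOn ℝ α I)
    (hnormal : ∀ s ∈ I, ⟪α s - p, V s⟫_ℝ = 0)
    (hne : ∀ᶠ s in codiscreteWithin I, ⟪α s - p, deriv α s⟫_ℝ ≠ 0) :
    ∃ d, ∀ s ∈ I, V s = d := by
  refine exists_eq_const_of_hasDerivAt_zero_codiscreteWithin hIo hIc
    (fun s hs => (hV.differentiableAt s hs).continuousAt.continuousWithinAt) ?_
  filter_upwards [hne, self_mem_codiscreteWithin I] with s hsne hs
  rw [← hV.deriv_eq_zero hIo hnormal hs (hα.differentiableAt (hIo.mem_nhds hs)) hsne]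
  exact (hV.differentiableAt s hs).hasDerivAt

end IsRotationMinimizingOn

theorem normal_wrt_RM_field_is_plane_or_sphere_general (hIo : IsOpen I) (hIc : IsPreconnected I)
    (hα : AnalyticOnNhd ℝ α I) (hV : IsRotationMinimizingOn I α V) (hV0 : ∃ s ∈ I, V s ≠ 0)
    (hnormal : ∀ s ∈ I, ⟪α s - p, V s⟫_ℝ = 0) :
    (∃ d : E, d ≠ 0 ∧ ∃ c : ℝ, ∀ s ∈ I, ⟪α s, d⟫_ℝ = c) ∨
    (∃ q : E, ∃ R : ℝ, 0 < R ∧ ∀ s ∈ I, ‖α s - q‖ = R) := by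
  obtain ⟨s₀, hs₀, hVs₀⟩ := hV0
  have hf : AnalyticOnNhd ℝ (fun s => ⟪α s - p, deriv α s⟫_ℝ) I :=
    analyticOnNhd_inner (hα.sub analyticOnNhd_const) (hα.deriv_of_isOpen hIo)
  rcases hf.eqOn_zero_or_eventually_ne_zero_of_preconnected hIc with hzero | hne
  · obtain ⟨R, hR⟩ := exists_norm_sub_eq_of_inner_deriv_eq_zero hIo hIc hα.differentiableOn hzero
    rcases (hR s₀ hs₀ ▸ norm_nonneg _ : 0 ≤ R).eq_or_lt with rfl | hRpos
    · have hαp (s : ℝ) (hs : s ∈ I) : α s = p := norm_sub_eq_zero_iff.1 (hR s hs)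
      exact .inl ⟨V s₀, hVs₀, ⟪p, V s₀⟫_ℝ, fun s hs => by rw [hαp s hs]⟩
    · exact .inr ⟨p, R, hRpos, hR⟩
  · obtain ⟨d, hd⟩ := hV.exists_eq_const hIo hIc hα.differentiableOn hnormal hne
    refine .inl ⟨d, hd s₀ hs₀ ▸ hVs₀, ⟪p, d⟫_ℝ, fun s hs => ?_⟩
    rw [← sub_eq_zero, ← inner_sub_left, ← hd s hs, hnormal s hs]

end RotationMinimizing

/-- If a real-analytic unit-speed curve `α : I → ℝⁿ` is normal with
respect to a real-analytic rotation minimizing normal field `V` (unit, `⟪V, α'⟫ = 0`,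
`V'` everywhere a scalar multiple of `α'`, and `⟪α - p, V⟫ ≡ 0`), then `α` lies in a
hyperplane or on a sphere. -/
theorem normal_wrt_RM_field_is_plane_or_sphere
    {n : ℕ} (hn : 3 ≤ n)
    (I : Set ℝ) (hIopen : IsOpen I) (hIne : I.Nonempty) (hIconv : Convex ℝ I)
    (α V : ℝ → EuclideanSpace ℝ (Fin n)) (p : EuclideanSpace ℝ (Fin n))
    (hαan : AnalyticOnNhd ℝ α I)
    (hunit : ∀ s ∈ I, ‖deriv α s‖ = 1)
    (hVan : AnalyticOnNhd ℝ V I)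
    (hVunit : ∀ s ∈ I, ‖V s‖ = 1)
    (hVnormal : ∀ s ∈ I, ⟪V s, deriv α s⟫_ℝ = 0)
    (hRM : ∀ s ∈ I, ∃ lam : ℝ, deriv V s = lam • deriv α s)
    (hnormal : ∀ s ∈ I, ⟪α s - p, V s⟫_ℝ = 0) :
    (∃ d : EuclideanSpace ℝ (Fin n), d ≠ 0 ∧ ∃ c : ℝ, ∀ s ∈ I, ⟪α s, d⟫_ℝ = c) ∨
    (∃ q : EuclideanSpace ℝ (Fin n), ∃ R : ℝ, 0 < R ∧ ∀ s ∈ I, ‖α s - q‖ = R) := by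
  have hVne : ∃ s ∈ I, V s ≠ 0 :=
    hIne.imp fun s hs => ⟨hs, ne_zero_of_norm_ne_zero (hVunit s hs ▸ one_ne_zero)⟩
  exact normal_wrt_RM_field_is_plane_or_sphere_general hIopen hIconv.isPreconnected hαan
    ⟨fun s hs => (hVan s hs).differentiableAt, hVnormal, hRM⟩ hVne hnormal
end

section
/- Let α: I → ℝⁿ (n ≥ 3) be a C² unit-speed curve on a nonempty open interval I ⊆ ℝ. Suppose α lies in a hyperplane (there exist d ≠ 0 and c ∈ ℝ with ⟨α(s), d⟩ = c for all s ∈ I) or α lies on a sphere (there exist q ∈ ℝⁿ and R > 0 with ‖α(s) − q‖ = R for all s ∈ I). Then there exist a point p ∈ ℝⁿ and a C¹ vector field V: I → ℝⁿ with ‖V(s)‖ = 1, ⟨V(s), α'(s)⟩ = 0, V'(s) a scalar multiple of α'(s) for every s ∈ I (V is rotation minimizing), and ⟨α(s) − p, V(s)⟩ = 0 for all s ∈ I (α is normal with respect to the RM field V). -/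
open scoped InnerProductSpace

/-!
If `α` lies in a hyperplane with unit normal `d`, the constant field `d` is rotation minimizing.
If `α` lies on a sphere with center `q`, then `α - q` is normal to the curve and its derivative is
`α'`, so `α - q` is itself parallel for the normal connection. Parallel normal fields keep their
mutual inner products; it therefore suffices to transport in parallel a unit vector which is
orthogonal to both `α'` and `α - q` at one point, and such a vector exists in dimension at least
three. When `‖T‖ = 1`, parallel transport along `T` is the linear equation `V' = -⟪V, T'⟫ T`, solved
on the whole interval at once by its Peano–Baker series.
-/

section LinearODE

variable {E : Type*} [NormedAddCommGroup E] [NormedSpace ℝ E]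

/-- The terms of the Peano–Baker series, the iterated-integral expansion of the solution of
`V' t = L t (V t)`, `V t₀ = v₀`. -/
noncomputable def peanoBaker (L : ℝ → E →L[ℝ] E) (t₀ : ℝ) (v₀ : E) : ℕ → ℝ → E
  | 0, _ => v₀
  | n + 1, t => ∫ s in t₀..t, L s (peanoBaker L t₀ v₀ n s)

variable {L : ℝ → E →L[ℝ] E} {t₀ t K : ℝ} {I : Set ℝ}

open scoped Nat in
theorem norm_peanoBaker_le (v₀ : E) (hL : ∀ s ∈ Set.uIcc t₀ t, ‖L s‖ ≤ K) (n : ℕ) :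
    ‖peanoBaker L t₀ v₀ n t‖ ≤ (K * |t - t₀|) ^ n / n ! * ‖v₀‖ := by
  induction n generalizing t with
  | zero => simp [peanoBaker]
  | succ n ih =>
    have hbound : ∀ s ∈ Set.uIoc t₀ t,
        ‖L s (peanoBaker L t₀ v₀ n s)‖ ≤ K ^ (n + 1) * ‖v₀‖ / n ! * |s - t₀| ^ n := by
      intro s hs
      have hst := Set.uIoc_subset_uIcc hs
      calc ‖L s (peanoBaker L t₀ v₀ n s)‖
          ≤ K * ((K * |s - t₀|) ^ n / n ! * ‖v₀‖) :=
            (L s).le_of_opNorm_le_of_le (hL s hst)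
              (ih fun r hr ↦ hL r (Set.uIcc_subset_uIcc_left hst hr))
        _ = K ^ (n + 1) * ‖v₀‖ / n ! * |s - t₀| ^ n := by ring
    calc ‖peanoBaker L t₀ v₀ (n + 1) t‖
        ≤ ∫ s in Set.uIoc t₀ t, K ^ (n + 1) * ‖v₀‖ / n ! * |s - t₀| ^ n := by
          rw [peanoBaker, intervalIntegral.norm_intervalIntegral_eq]
          exact MeasureTheory.norm_integral_le_of_norm_le
            (Continuous.integrableOn_uIoc (by fun_prop))
            ((MeasureTheory.ae_restrict_mem measurableSet_uIoc).mono hbound)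
      _ = (K * |t - t₀|) ^ (n + 1) / (n + 1)! * ‖v₀‖ := by
          rw [MeasureTheory.integral_const_mul, integral_pow_abs_sub_uIoc, Nat.factorial_succ]
          push_cast
          field_simp
          ring

variable [CompleteSpace E]

theorem hasDerivAt_integral_of_continuousOn {f : ℝ → E} (hI : IsOpen I) (hIc : I.OrdConnected)
    (hf : ContinuousOn f I) (ht₀ : t₀ ∈ I) (ht : t ∈ I) :
    HasDerivAt (fun r ↦ ∫ s in t₀..r, f s) (f t) t :=
  intervalIntegral.integral_hasDerivAt_right
    (hf.mono (hIc.uIcc_subset ht₀ ht)).intervalIntegrable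
    (hf.stronglyMeasurableAtFilter hI t ht) (hf.continuousAt (hI.mem_nhds ht))

theorem continuousOn_peanoBaker (hI : IsOpen I) (hIc : I.OrdConnected) (hL : ContinuousOn L I)
    (ht₀ : t₀ ∈ I) (v₀ : E) (n : ℕ) : ContinuousOn (peanoBaker L t₀ v₀ n) I := by
  induction n with
  | zero => exact continuousOn_const
  | succ n ih =>
    exact HasDerivAt.continuousOn fun t ht ↦
      hasDerivAt_integral_of_continuousOn hI hIc (hL.clm_apply ih) ht₀ ht

theorem hasDerivAt_peanoBaker_succ (hI : IsOpen I) (hIc : I.OrdConnected) (hL : ContinuousOn L I)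
    (ht₀ : t₀ ∈ I) (ht : t ∈ I) (v₀ : E) (n : ℕ) :
    HasDerivAt (peanoBaker L t₀ v₀ (n + 1)) (L t (peanoBaker L t₀ v₀ n t)) t :=
  hasDerivAt_integral_of_continuousOn hI hIc
    (hL.clm_apply (continuousOn_peanoBaker hI hIc hL ht₀ v₀ n)) ht₀ ht

open scoped Nat in
theorem hasDerivAt_tsum_peanoBaker {a b : ℝ} (hL : ContinuousOn L (Set.Icc a b))
    (ht₀ : t₀ ∈ Set.Ioo a b) (ht : t ∈ Set.Ioo a b) (v₀ : E) :
    HasDerivAt (fun r ↦ v₀ + ∑' n, peanoBaker L t₀ v₀ (n + 1) r)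
      (L t (v₀ + ∑' n, peanoBaker L t₀ v₀ (n + 1) t)) t := by
  obtain ⟨K, hK⟩ := isCompact_Icc.exists_bound_of_continuousOn hL
  have hK₀ : 0 ≤ K := (norm_nonneg _).trans (hK t₀ (Set.Ioo_subset_Icc_self ht₀))
  have hterm : ∀ n, ∀ r ∈ Set.Ioo a b,
      ‖peanoBaker L t₀ v₀ n r‖ ≤ (K * (b - a)) ^ n / n ! * ‖v₀‖ := by
    intro n r hr
    have hsub : Set.uIcc t₀ r ⊆ Set.Icc a b :=
      Set.ordConnected_Icc.uIcc_subset (Set.Ioo_subset_Icc_self ht₀) (Set.Ioo_subset_Icc_self hr)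
    have hdist : |r - t₀| ≤ b - a :=
      abs_le.2 ⟨by linarith [ht₀.2, hr.1], by linarith [ht₀.1, hr.2]⟩
    exact (norm_peanoBaker_le v₀ (fun s hs ↦ hK s (hsub hs)) n).trans (by gcongr)
  have hsum : Summable fun n : ℕ ↦ (K * (b - a)) ^ n / n ! * ‖v₀‖ :=
    (Real.summable_pow_div_factorial _).mul_right _
  have hsummable : Summable fun n ↦ peanoBaker L t₀ v₀ n t :=
    .of_norm_bounded hsum fun n ↦ hterm n t ht
  have hderiv : HasDerivAt (fun r ↦ ∑' n, peanoBaker L t₀ v₀ (n + 1) r)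
      (∑' n, L t (peanoBaker L t₀ v₀ n t)) t :=
    hasDerivAt_tsum_of_isPreconnected (hsum.mul_left K) isOpen_Ioo isPreconnected_Ioo
      (fun n r hr ↦ hasDerivAt_peanoBaker_succ isOpen_Ioo Set.ordConnected_Ioo
        (hL.mono Set.Ioo_subset_Icc_self) ht₀ hr v₀ n)
      (fun n r hr ↦ (L r).le_of_opNorm_le_of_le (hK r (Set.Ioo_subset_Icc_self hr)) (hterm n r hr))
      ht ((summable_nat_add_iff 1).2 hsummable) ht
  have hsplit : ∑' n, peanoBaker L t₀ v₀ n t = v₀ + ∑' n, peanoBaker L t₀ v₀ (n + 1) t :=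
    hsummable.tsum_eq_zero_add
  rw [← hsplit, (L t).map_tsum hsummable]
  exact hderiv.const_add v₀

theorem exists_mem_Ioo_Icc_subset {X : Type*} [LinearOrder X] [TopologicalSpace X]
    [OrderTopology X] [DenselyOrdered X] [NoMinOrder X] [NoMaxOrder X] {I : Set X} {x y : X}
    (hI : IsOpen I) (hIc : I.OrdConnected) (hx : x ∈ I) (hy : y ∈ I) :
    ∃ a b, x ∈ Set.Ioo a b ∧ y ∈ Set.Ioo a b ∧ Set.Icc a b ⊆ I := by
  obtain ⟨a, ha, haI⟩ := (hI.eventually_mem (min_rec' (· ∈ I) hx hy)).exists_lt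
  obtain ⟨b, hb, hbI⟩ := (hI.eventually_mem (max_rec' (· ∈ I) hx hy)).exists_gt
  obtain ⟨hax, hay⟩ := lt_min_iff.1 ha
  obtain ⟨hxb, hyb⟩ := max_lt_iff.1 hb
  exact ⟨a, b, ⟨hax, hxb⟩, ⟨hay, hyb⟩, hIc.out haI hbI⟩

theorem exists_eq_forall_mem_hasDerivAt_clm_apply (hI : IsOpen I) (hIc : I.OrdConnected)
    (hL : ContinuousOn L I) (ht₀ : t₀ ∈ I) (v₀ : E) :
    ∃ V : ℝ → E, V t₀ = v₀ ∧ ∀ t ∈ I, HasDerivAt V (L t (V t)) t := by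
  refine ⟨fun t ↦ v₀ + ∑' n, peanoBaker L t₀ v₀ (n + 1) t, by simp [peanoBaker], fun t ht ↦ ?_⟩
  obtain ⟨a, b, ht₀J, htJ, hJ⟩ := exists_mem_Ioo_Icc_subset hI hIc ht₀ ht
  exact hasDerivAt_tsum_peanoBaker (hL.mono hJ) ht₀J htJ v₀

end LinearODE

section ParallelNormal

variable {E : Type*} [NormedAddCommGroup E] [InnerProductSpace ℝ E]

/-- `V` is orthogonal to `T` and parallel for the normal connection of a curve with tangent field
`T`: a rotation minimizing field, except that it is not required to have unit length. Only
differentiability of `V` at the points of `I` is asked for. -/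
structure IsParallelNormalOn (T V : ℝ → E) (I : Set ℝ) : Prop where
  inner_eq_zero : ∀ t ∈ I, ⟪V t, T t⟫_ℝ = 0
  exists_hasDerivAt : ∀ t ∈ I, ∃ c : ℝ, HasDerivAt V (c • T t) t

variable {I : Set ℝ} {T V W : ℝ → E} {s t t₀ : ℝ}

theorem eq_of_hasDerivAt_zero {F : Type*} [NormedAddCommGroup F] [NormedSpace ℝ F] {f : ℝ → F}
    (hI : IsOpen I) (hIc : IsPreconnected I) (hf : ∀ r ∈ I, HasDerivAt f 0 r)
    (hs : s ∈ I) (ht : t ∈ I) : f s = f t :=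
  hI.is_const_of_deriv_eq_zero hIc
    (fun r hr ↦ (hf r hr).differentiableAt.differentiableWithinAt) (fun r hr ↦ (hf r hr).deriv)
    hs ht

namespace IsParallelNormalOn

theorem inner_eq_inner (hV : IsParallelNormalOn T V I) (hW : IsParallelNormalOn T W I)
    (hI : IsOpen I) (hIc : IsPreconnected I) (hs : s ∈ I) (ht : t ∈ I) :
    ⟪V s, W s⟫_ℝ = ⟪V t, W t⟫_ℝ := by
  refine eq_of_hasDerivAt_zero (f := fun r ↦ ⟪V r, W r⟫_ℝ) hI hIc (fun r hr ↦ ?_) hs ht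
  obtain ⟨c, hc⟩ := hV.exists_hasDerivAt r hr
  obtain ⟨d, hd⟩ := hW.exists_hasDerivAt r hr
  refine (hc.inner ℝ hd).congr_deriv ?_
  rw [real_inner_smul_left, real_inner_smul_right, hV.inner_eq_zero r hr,
    real_inner_comm (W r) (T r), hW.inner_eq_zero r hr, mul_zero, mul_zero, add_zero]

theorem norm_eq_norm (hV : IsParallelNormalOn T V I) (hI : IsOpen I) (hIc : IsPreconnected I)
    (hs : s ∈ I) (ht : t ∈ I) : ‖V s‖ = ‖V t‖ := by
  rw [norm_eq_sqrt_real_inner, norm_eq_sqrt_real_inner, hV.inner_eq_inner hV hI hIc hs ht]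

theorem hasDerivAt (hV : IsParallelNormalOn T V I) (hI : IsOpen I) (hT : DifferentiableOn ℝ T I)
    (hT₁ : ∀ r ∈ I, ‖T r‖ = 1) (ht : t ∈ I) :
    HasDerivAt V (-⟪V t, deriv T t⟫_ℝ • T t) t := by
  obtain ⟨c, hc⟩ := hV.exists_hasDerivAt t ht
  have hTt := (hT.differentiableAt (hI.mem_nhds ht)).hasDerivAt
  have hzero : HasDerivAt (fun r ↦ ⟪V r, T r⟫_ℝ) 0 t :=
    (hasDerivAt_const t 0).congr_of_eventuallyEq
      (Filter.eventuallyEq_of_mem (hI.mem_nhds ht) hV.inner_eq_zero)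
  have hsum : ⟪V t, deriv T t⟫_ℝ + c = 0 := by
    simpa [real_inner_smul_left, real_inner_self_eq_norm_sq, hT₁ t ht]
      using (hc.inner ℝ hTt).unique hzero
  rwa [← eq_neg_of_add_eq_zero_right hsum]

theorem contDiffOn (hV : IsParallelNormalOn T V I) (hI : IsOpen I) (hT : ContDiffOn ℝ 1 T I)
    (hT₁ : ∀ r ∈ I, ‖T r‖ = 1) : ContDiffOn ℝ 1 V I := by
  have hderiv : ∀ t ∈ I, HasDerivAt V (-⟪V t, deriv T t⟫_ℝ • T t) t := fun t ht ↦
    hV.hasDerivAt hI hT.differentiableOn_one hT₁ ht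
  have hcont : ContinuousOn (fun t ↦ -⟪V t, deriv T t⟫_ℝ • T t) I :=
    ((HasDerivAt.continuousOn hderiv).inner
      (hT.continuousOn_deriv_of_isOpen hI le_rfl)).neg.smul hT.continuousOn
  refine (contDiffOn_succ_iff_deriv_of_isOpen (n := 0) hI).2
    ⟨fun t ht ↦ (hderiv t ht).differentiableAt.differentiableWithinAt, by simp, ?_⟩
  exact contDiffOn_zero.2 (hcont.congr fun t ht ↦ (hderiv t ht).deriv)

end IsParallelNormalOn

theorem isParallelNormalOn_of_hasDerivAt (hI : IsOpen I) (hIc : IsPreconnected I)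
    (hT : DifferentiableOn ℝ T I) (hT₁ : ∀ r ∈ I, ‖T r‖ = 1)
    (hV : ∀ r ∈ I, HasDerivAt V (-⟪V r, deriv T r⟫_ℝ • T r) r)
    (ht₀ : t₀ ∈ I) (hVt₀ : ⟪V t₀, T t₀⟫_ℝ = 0) : IsParallelNormalOn T V I where
  inner_eq_zero t ht := by
    rw [← hVt₀]
    refine eq_of_hasDerivAt_zero (f := fun r ↦ ⟪V r, T r⟫_ℝ) hI hIc (fun r hr ↦ ?_) ht ht₀
    refine ((hV r hr).inner ℝ (hT.differentiableAt (hI.mem_nhds hr)).hasDerivAt).congr_deriv ?_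
    simp [real_inner_smul_left, hT₁ r hr]
  exists_hasDerivAt t ht := ⟨_, hV t ht⟩

theorem exists_isParallelNormalOn [CompleteSpace E] (hI : IsOpen I) (hIc : IsPreconnected I)
    (hT : ContDiffOn ℝ 1 T I) (hT₁ : ∀ r ∈ I, ‖T r‖ = 1) (ht₀ : t₀ ∈ I) {v₀ : E}
    (hv₀ : ⟪v₀, T t₀⟫_ℝ = 0) : ∃ V : ℝ → E, V t₀ = v₀ ∧ IsParallelNormalOn T V I := by
  let L (t : ℝ) : E →L[ℝ] E := -(innerSL ℝ (deriv T t)).smulRight (T t)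
  have hL : ContinuousOn L I :=
    (((ContinuousLinearMap.smulRightL ℝ E E).continuous.comp_continuousOn
      ((innerSL ℝ).continuous.comp_continuousOn
        (hT.continuousOn_deriv_of_isOpen hI le_rfl))).clm_apply hT.continuousOn).neg
  obtain ⟨V, rfl, hV⟩ := exists_eq_forall_mem_hasDerivAt_clm_apply hI hIc.ordConnected hL ht₀ v₀
  refine ⟨V, rfl, isParallelNormalOn_of_hasDerivAt hI hIc hT.differentiableOn_one hT₁
    (fun t ht ↦ ?_) ht₀ hv₀⟩
  simpa [L, real_inner_comm] using hV t ht

end ParallelNormal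

section HyperplaneSphere

variable {E : Type*} [NormedAddCommGroup E] [InnerProductSpace ℝ E] {I : Set ℝ} {α : ℝ → E}

theorem isParallelNormalOn_const_of_inner_eq {d : E} {c : ℝ} (hI : IsOpen I)
    (hα : DifferentiableOn ℝ α I) (h : ∀ s ∈ I, ⟪α s, d⟫_ℝ = c) :
    IsParallelNormalOn (deriv α) (fun _ ↦ d) I where
  inner_eq_zero s hs := by
    have hconst : HasDerivAt (fun t ↦ ⟪α t, d⟫_ℝ) 0 s :=
      (hasDerivAt_const s c).congr_of_eventuallyEq (Filter.eventuallyEq_of_mem (hI.mem_nhds hs) h)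
    have hderiv := (hα.differentiableAt (hI.mem_nhds hs)).hasDerivAt.inner ℝ (hasDerivAt_const s d)
    rw [real_inner_comm]
    simpa using hderiv.unique hconst
  exists_hasDerivAt s _ := ⟨0, by simpa using hasDerivAt_const s d⟩

theorem isParallelNormalOn_sub_of_norm_sub_eq {q : E} {R : ℝ} (hI : IsOpen I)
    (hα : DifferentiableOn ℝ α I) (h : ∀ s ∈ I, ‖α s - q‖ = R) :
    IsParallelNormalOn (deriv α) (fun s ↦ α s - q) I := by
  have hderiv : ∀ s ∈ I, HasDerivAt (fun t ↦ α t - q) (deriv α s) s := fun s hs ↦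
    (hα.differentiableAt (hI.mem_nhds hs)).hasDerivAt.sub_const q
  refine ⟨fun s hs ↦ ?_, fun s hs ↦ ⟨1, by simpa using hderiv s hs⟩⟩
  have hconst : HasDerivAt (fun t ↦ ‖α t - q‖ ^ 2) 0 s :=
    (hasDerivAt_const s (R ^ 2)).congr_of_eventuallyEq
      (Filter.eventuallyEq_of_mem (hI.mem_nhds hs) fun t ht ↦ by simp only [h t ht])
  simpa using (hderiv s hs).norm_sq.unique hconst

theorem exists_norm_eq_one_forall_inner_eq_zero (S : Finset E)
    (hS : (S.card : Cardinal) < Module.rank ℝ E) :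
    ∃ v : E, ‖v‖ = 1 ∧ ∀ x ∈ S, ⟪v, x⟫_ℝ = 0 := by
  have hspan : Submodule.span ℝ (S : Set E) ≠ ⊤ := fun htop ↦
    ((rank_span_finset_le S).trans_lt hS).ne (by rw [htop, rank_top])
  obtain ⟨w, hw, hw₀⟩ := Submodule.exists_mem_ne_zero_of_ne_bot
    (mt Submodule.orthogonal_eq_bot_iff.1 hspan)
  refine ⟨‖w‖⁻¹ • w, norm_smul_inv_norm hw₀, fun x hx ↦ ?_⟩
  rw [real_inner_smul_left, (Submodule.mem_orthogonal' _ w).1 hw x (Submodule.subset_span hx),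
    mul_zero]

theorem exists_isParallelNormalOn_of_inner_eq {d : E} {c t₀ : ℝ} (hI : IsOpen I)
    (hα : DifferentiableOn ℝ α I) (ht₀ : t₀ ∈ I) (hd : d ≠ 0) (h : ∀ s ∈ I, ⟪α s, d⟫_ℝ = c) :
    ∃ p, ∃ V : ℝ → E, IsParallelNormalOn (deriv α) V I ∧ ‖V t₀‖ = 1 ∧
      ∀ s ∈ I, ⟪α s - p, V s⟫_ℝ = 0 := by
  have hunit : ∀ s ∈ I, ⟪α s, ‖d‖⁻¹ • d⟫_ℝ = ‖d‖⁻¹ * c := fun s hs ↦ by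
    rw [real_inner_smul_right, h s hs]
  refine ⟨α t₀, fun _ ↦ ‖d‖⁻¹ • d, isParallelNormalOn_const_of_inner_eq hI hα hunit,
    norm_smul_inv_norm hd, fun s hs ↦ ?_⟩
  rw [inner_sub_left, hunit s hs, hunit t₀ ht₀, sub_self]

theorem exists_isParallelNormalOn_of_norm_sub_eq [CompleteSpace E] (hdim : 2 < Module.rank ℝ E)
    {q : E} {R t₀ : ℝ} (hI : IsOpen I) (hIc : IsPreconnected I) (hα : DifferentiableOn ℝ α I)
    (hT : ContDiffOn ℝ 1 (deriv α) I) (hunit : ∀ s ∈ I, ‖deriv α s‖ = 1) (ht₀ : t₀ ∈ I)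
    (h : ∀ s ∈ I, ‖α s - q‖ = R) :
    ∃ p, ∃ V : ℝ → E, IsParallelNormalOn (deriv α) V I ∧ ‖V t₀‖ = 1 ∧
      ∀ s ∈ I, ⟪α s - p, V s⟫_ℝ = 0 := by
  classical
  obtain ⟨v₀, hv₀, horth⟩ := exists_norm_eq_one_forall_inner_eq_zero {deriv α t₀, α t₀ - q}
    ((Nat.cast_le.2 Finset.card_le_two).trans_lt hdim)
  obtain ⟨V, rfl, hV⟩ := exists_isParallelNormalOn hI hIc hT hunit ht₀ (horth _ (by simp))
  refine ⟨q, V, hV, hv₀, fun s hs ↦ ?_⟩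
  rw [(isParallelNormalOn_sub_of_norm_sub_eq hI hα h).inner_eq_inner hV hI hIc hs ht₀,
    real_inner_comm]
  exact horth _ (by simp)

theorem plane_or_sphere_curve_is_normal_wrt_RM_field_general [CompleteSpace E]
    (hdim : 2 < Module.rank ℝ E) (hI : IsOpen I) (hIne : I.Nonempty) (hIc : IsPreconnected I)
    (hC2 : ContDiffOn ℝ 2 α I) (hunit : ∀ s ∈ I, ‖deriv α s‖ = 1)
    (hps : (∃ d : E, d ≠ 0 ∧ ∃ c : ℝ, ∀ s ∈ I, ⟪α s, d⟫_ℝ = c) ∨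
      (∃ q : E, ∃ R : ℝ, ∀ s ∈ I, ‖α s - q‖ = R)) :
    ∃ p : E, ∃ V : ℝ → E,
      ContDiffOn ℝ 1 V I ∧
      (∀ s ∈ I, ‖V s‖ = 1) ∧
      (∀ s ∈ I, ⟪V s, deriv α s⟫_ℝ = 0) ∧
      (∀ s ∈ I, ∃ c : ℝ, deriv V s = c • deriv α s) ∧
      (∀ s ∈ I, ⟪α s - p, V s⟫_ℝ = 0) := by
  obtain ⟨t₀, ht₀⟩ := hIne
  have hα : DifferentiableOn ℝ α I := hC2.differentiableOn two_ne_zero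
  have hT : ContDiffOn ℝ 1 (deriv α) I := hC2.deriv_of_isOpen hI one_add_one_eq_two.le
  obtain ⟨p, V, hV, hVt₀, hp⟩ : ∃ p, ∃ V : ℝ → E, IsParallelNormalOn (deriv α) V I ∧
      ‖V t₀‖ = 1 ∧ ∀ s ∈ I, ⟪α s - p, V s⟫_ℝ = 0 := by
    rcases hps with ⟨d, hd, c, hplane⟩ | ⟨q, R, hsphere⟩
    · exact exists_isParallelNormalOn_of_inner_eq hI hα ht₀ hd hplane
    · exact exists_isParallelNormalOn_of_norm_sub_eq hdim hI hIc hα hT hunit ht₀ hsphere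
  exact ⟨p, V, hV.contDiffOn hI hT hunit,
    fun s hs ↦ (hV.norm_eq_norm hI hIc hs ht₀).trans hVt₀, hV.inner_eq_zero,
    fun s hs ↦ (hV.exists_hasDerivAt s hs).imp fun _ hc ↦ hc.deriv, hp⟩

end HyperplaneSphere

/-- Every C² unit-speed curve `α : I → ℝⁿ` (`n ≥ 3`) lying in a
hyperplane or on a sphere is normal with respect to some rotation minimizing normal
field: there exist a point `p` and a C¹ unit vector field `V` along `α` with
`⟪V, α'⟫ = 0`, `V'` everywhere a scalar multiple of `α'`, and `⟪α - p, V⟫ ≡ 0`. -/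
theorem plane_or_sphere_curve_is_normal_wrt_RM_field
    {n : ℕ} (hn : 3 ≤ n)
    (I : Set ℝ) (hIopen : IsOpen I) (hIne : I.Nonempty) (hIconv : Convex ℝ I)
    (α : ℝ → EuclideanSpace ℝ (Fin n))
    (hC2 : ContDiffOn ℝ 2 α I)
    (hunit : ∀ s ∈ I, ‖deriv α s‖ = 1)
    (hps : (∃ d : EuclideanSpace ℝ (Fin n), d ≠ 0 ∧ ∃ c : ℝ, ∀ s ∈ I, ⟪α s, d⟫_ℝ = c) ∨
      (∃ q : EuclideanSpace ℝ (Fin n), ∃ R : ℝ, 0 < R ∧ ∀ s ∈ I, ‖α s - q‖ = R)) :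
    ∃ p : EuclideanSpace ℝ (Fin n), ∃ V : ℝ → EuclideanSpace ℝ (Fin n),
      ContDiffOn ℝ 1 V I ∧
      (∀ s ∈ I, ‖V s‖ = 1) ∧
      (∀ s ∈ I, ⟪V s, deriv α s⟫_ℝ = 0) ∧
      (∀ s ∈ I, ∃ lam : ℝ, deriv V s = lam • deriv α s) ∧
      (∀ s ∈ I, ⟪α s - p, V s⟫_ℝ = 0) := by
  have hdim : 2 < Module.rank ℝ (EuclideanSpace ℝ (Fin n)) :=
    Module.lt_rank_of_lt_finrank (by rw [finrank_euclideanSpace_fin]; exact hn)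
  exact plane_or_sphere_curve_is_normal_wrt_RM_field_general hdim hIopen hIne
    hIconv.isPreconnected hC2 hunit (hps.imp_right fun ⟨q, R, _, hR⟩ ↦ ⟨q, R, hR⟩)
end
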